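/- arXiv:2301.09104 — 5 statements merged into one kernel-verified Lean document; each statement's English description precedes it below -/
import Mathlib

section
/- Let φ : R_{n+1} → R_n be the K-algebra homomorphism determined by φ(x_i) = x_i for 1 ≤ i ≤ n and φ(x_{n+1}) = x_1. Then the image under φ of the ideal P_n + ⟨x_{n+1} − x_1⟩ of R_{n+1} equals the toppling ideal I_{C_n} of the cycle C_n, i.e. φ(P_n + ⟨x_{n+1} − x_1⟩) = I_{C_n} as ideals of R_n. -/
noncomputable section

open MvPolynomial

/-- Row of the Laplacian matrix of the `n`-cycle on `Fin n`
(vertex `j` of the paper corresponds to index `j-1`). -/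
def cycLap (n : ℕ) [NeZero n] (j : Fin n) : Fin n → ℤ :=
  fun l => if l = j then 2 else if l = j + 1 ∨ j = l + 1 then -1 else 0

/-- The cycle graph `C_n` on `Fin n`. -/
def cycleG (n : ℕ) [NeZero n] : SimpleGraph (Fin n) :=
  SimpleGraph.fromRel (fun i j => j = i + 1)

/-- The lattice ideal of a lattice `L ⊆ ℤ^n` in `K[x_1,…,x_n]`. -/
def latticeIdeal (n : ℕ) (K : Type*) [Field K] (L : Submodule ℤ (Fin n → ℤ)) :
    Ideal (MvPolynomial (Fin n) K) :=
  Ideal.span { f | ∃ u v : Fin n → ℕ,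
    ((fun i => (u i : ℤ)) - fun i => (v i : ℤ)) ∈ L ∧
    f = (∏ i, X i ^ u i) - ∏ i, X i ^ v i }

open Classical in
/-- The exponent vector of the monomial `x^{S → S̄}`: the `i`-th entry is the number
of edges of the cycle joining `i ∈ S` to the complement of `S`. -/
def outVec (n : ℕ) [NeZero n] (S : Set (Fin n)) (i : Fin n) : ℕ :=
  if i ∈ S then (if i + 1 ∈ S then 0 else 1) + (if i - 1 ∈ S then 0 else 1) else 0

/-- The monomial `x^{S → S̄}`. -/
def outMono (n : ℕ) (K : Type*) [NeZero n] [Field K] (S : Set (Fin n)) :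
    MvPolynomial (Fin n) K :=
  ∏ i, X i ^ outVec n S i

open Classical in
/-- `b_V = ∑_{j ∈ V} b_j`, sum of Laplacian rows over a set of vertices. -/
def bPart (n : ℕ) [NeZero n] (S : Set (Fin n)) : Fin n → ℤ :=
  ∑ j : Fin n, if j ∈ S then cycLap n j else 0

/-- The toppling ideal of the parcycle `(C_n, {V_1,…,V_k})`: the lattice ideal of the
lattice generated by the vectors `b_{V_j}`. -/
def topplingPar (n k : ℕ) (K : Type*) [NeZero n] [Field K] (V : Fin k → Set (Fin n)) :
    Ideal (MvPolynomial (Fin n) K) :=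
  latticeIdeal n K (Submodule.span ℤ (Set.range fun j => bPart n (V j)))

/-- `S` is a connected-parset of the parcycle `(C_n, V)`: a union of parts inducing a
connected subgraph of the cycle. -/
def isConnParset (n k : ℕ) [NeZero n] (V : Fin k → Set (Fin n)) (S : Set (Fin n)) : Prop :=
  (∃ T : Set (Fin k), S = ⋃ j ∈ T, V j) ∧ ((cycleG n).induce S).Connected

/-- The `G`-parking function ideal of a parcycle with sink part `V sink`. -/
def gparkIdeal (n k : ℕ) (K : Type*) [NeZero n] [Field K] (V : Fin k → Set (Fin n))
    (sink : Fin k) : Ideal (MvPolynomial (Fin n) K) :=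
  Ideal.span { f | ∃ S : Set (Fin n), isConnParset n k V S ∧ ¬ V sink ⊆ S ∧
    f = outMono n K S }

/-- The index in `Fin (n+1)` of the paper's variable `x_m`, `1 ≤ m ≤ n+1`. -/
def xIdx (n : ℕ) (m : ℕ) : Fin (n + 1) := ⟨(m - 1) % (n + 1), Nat.mod_lt _ (Nat.succ_pos n)⟩

/-- The defining ideal `P_n ⊆ K[x_1,…,x_{n+1}]` of the rational normal curve of degree `n`. -/
def Pideal (n : ℕ) (K : Type*) [Field K] : Ideal (MvPolynomial (Fin (n + 1)) K) :=
  Ideal.span { f | ∃ i j : ℕ, 2 ≤ i ∧ i ≤ j ∧ j ≤ n ∧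
    f = X (xIdx n i) * X (xIdx n j) - X (xIdx n (i - 1)) * X (xIdx n (j + 1)) }

open Classical in
/-- The `λ`-weight of an exponent vector. -/
def wdeg (n : ℕ) (lam : Fin n → ℕ) (u : Fin n →₀ ℕ) : ℕ := ∑ i, lam i * u i

open Classical in
/-- The `λ`-initial form of a polynomial: the sum of its terms of maximal `λ`-weight. -/
def initForm (n : ℕ) (K : Type*) [Field K] (lam : Fin n → ℕ) (f : MvPolynomial (Fin n) K) :
    MvPolynomial (Fin n) K :=
  ∑ u ∈ f.support.filter (fun u => wdeg n lam u = f.support.sup (wdeg n lam)),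
    monomial u (coeff u f)

/-- The `λ`-initial ideal of an ideal. -/
def initIdeal (n : ℕ) (K : Type*) [Field K] (lam : Fin n → ℕ)
    (I : Ideal (MvPolynomial (Fin n) K)) : Ideal (MvPolynomial (Fin n) K) :=
  Ideal.span { g | ∃ f ∈ I, f ≠ 0 ∧ g = initForm n K lam f }

/-!
Once `x_{n+1}` is identified with `x_1`, indices live in `ℤ/n`, and the `2 × 2` minors defining
`P_n` become `x_{i+1} x_j - x_i x_{j+1}` for arbitrary `i, j ∈ ℤ/n`. Shifting an index from one
factor to the other repeatedly, they generate the same ideal as the binomials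
`x_i x_j - x_0 x_{i+j}`. Modulo the latter a monomial `∏ x_i ^ u_i` depends only on its degree
`∑ u_i` and its weight `∑ u_i • i ∈ ℤ/n`, so this ideal is the lattice ideal of the lattice
`Λ = {w | ∑ w_i = 0, ∑ w_i • i = 0}`. Finally `Λ` is spanned by the rows of the Laplacian: modulo
the rows, `2 e_i = e_{i-1} + e_{i+1}`, so `e_0, e_1, …` is an arithmetic progression and
`i ↦ e_i - e_0` is additive.
-/

section CyclicShift

variable {n : ℕ} [NeZero n]

@[elab_as_elim]
theorem cyclic_induction {P : Fin n → Prop} (zero : P 0) (add_one : ∀ i, P i → P (i + 1))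
    (i : Fin n) : P i := by
  have ofNat (k : ℕ) : P (Fin.ofNat n k) := by
    induction k with
    | zero => exact zero
    | succ k ih =>
      have succ_eq : Fin.ofNat n (k + 1) = Fin.ofNat n k + 1 := by ext; simp [Fin.val_add]
      exact succ_eq ▸ add_one _ ih
  simpa using ofNat i

theorem apply_mul_apply_eq_of_shift {M : Type*} [Mul M] {y : Fin n → M}
    (shift : ∀ i j, y (i + 1) * y j = y i * y (j + 1)) (i j : Fin n) :
    y i * y j = y 0 * y (i + j) := by
  induction i using cyclic_induction generalizing j with
  | zero => rw [zero_add]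
  | add_one i ih => rw [shift, ih, add_assoc, add_comm 1 j]

theorem apply_add_apply_eq_of_midpoint {A : Type*} [AddCommGroup A] {e : Fin n → A}
    (midpoint : ∀ i, e i + e i = e (i - 1) + e (i + 1)) (i j : Fin n) :
    e i + e j = e 0 + e (i + j) := by
  have step (i : Fin n) : e (i + 1) - e i = e 1 - e 0 := by
    induction i using cyclic_induction with
    | zero => rw [zero_add]
    | add_one i ih =>
      have h := midpoint (i + 1)
      rw [add_sub_cancel_right] at h
      rw [← ih, sub_eq_sub_iff_add_eq_add, h, add_comm]
  induction i using cyclic_induction with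
  | zero => rw [zero_add]
  | add_one i ih =>
    calc e (i + 1) + e j = (e 1 - e 0) + (e i + e j) := by rw [← step i]; abel
      _ = (e (i + j + 1) - e (i + j)) + (e 0 + e (i + j)) := by rw [step, ih]
      _ = e 0 + e (i + 1 + j) := by rw [add_right_comm i 1 j]; abel

end CyclicShift

section ProductRule

variable {G M : Type*} [AddCommMonoid G] [CommMonoid M] {y : G → M}

theorem mul_prod_map_eq_pow_card_mul (hy : ∀ i j, y i * y j = y 0 * y (i + j)) (a : G)
    (s : Multiset G) :
    y a * (s.map y).prod = y 0 ^ s.card * y (a + s.sum) := by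
  induction s using Multiset.induction generalizing a with
  | empty => simp
  | cons b s ih =>
    rw [Multiset.map_cons, Multiset.prod_cons, Multiset.card_cons, Multiset.sum_cons, ← mul_assoc,
      hy, mul_assoc, ih, ← mul_assoc, pow_succ', add_assoc]

theorem prod_map_eq_of_card_eq_of_sum_eq (hy : ∀ i j, y i * y j = y 0 * y (i + j))
    {s t : Multiset G} (card_eq : s.card = t.card) (sum_eq : s.sum = t.sum) :
    (s.map y).prod = (t.map y).prod := by
  induction s using Multiset.induction with
  | empty => rw [Multiset.card_eq_zero.mp card_eq.symm]
  | cons a s _ =>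
    obtain ⟨b, ht⟩ := Multiset.card_pos_iff_exists_mem.mp (card_eq ▸ by simp : 0 < t.card)
    obtain ⟨t, rfl⟩ := Multiset.exists_cons_of_mem ht
    rw [Multiset.card_cons, Multiset.card_cons, Nat.add_right_cancel_iff] at card_eq
    rw [Multiset.sum_cons, Multiset.sum_cons] at sum_eq
    rw [Multiset.map_cons, Multiset.prod_cons, mul_prod_map_eq_pow_card_mul hy,
      Multiset.map_cons, Multiset.prod_cons, mul_prod_map_eq_pow_card_mul hy, card_eq, sum_eq]

theorem prod_pow_eq_of_degree_eq_of_weight_eq [Fintype G]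
    (hy : ∀ i j, y i * y j = y 0 * y (i + j)) {u v : G → ℕ}
    (degree_eq : ∑ g, u g = ∑ g, v g) (weight_eq : ∑ g, u g • g = ∑ g, v g • g) :
    ∏ g, y g ^ u g = ∏ g, y g ^ v g := by
  have prod_pow (w : G → ℕ) :
      ∏ g, y g ^ w g = ((∑ g, w g • {g} : Multiset G).map y).prod := by
    rw [← Multiset.coe_mapAddMonoidHom, map_sum, Multiset.prod_sum]
    simp [Multiset.map_nsmul, Multiset.prod_nsmul]
  rw [prod_pow, prod_pow]
  refine prod_map_eq_of_card_eq_of_sum_eq hy ?_ ?_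
  · simpa using degree_eq
  · simpa [Multiset.sum_sum, Multiset.sum_nsmul] using weight_eq

end ProductRule

section AdditionIdeal

/-- The ideal of `R[x_g : g ∈ G]` generated by the binomials `x_i x_j - x_0 x_{i+j}`, modulo which
a product of two variables depends only on the sum of their indices. -/
def additionIdeal (R G : Type*) [CommRing R] [AddMonoid G] : Ideal (MvPolynomial G R) :=
  Ideal.span {f | ∃ i j : G, f = X i * X j - X 0 * X (i + j)}

variable {R G : Type*} [CommRing R]

theorem additionIdeal_le_iff [AddMonoid G] {I : Ideal (MvPolynomial G R)} :
    additionIdeal R G ≤ I ↔ ∀ i j : G, X i * X j - X 0 * X (i + j) ∈ I := by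
  refine Ideal.span_le.trans ⟨fun h i j => h ⟨i, j, rfl⟩, ?_⟩
  rintro h _ ⟨i, j, rfl⟩
  exact h i j

theorem mk_X_mul_mk_X_additionIdeal [AddMonoid G] (i j : G) :
    Ideal.Quotient.mk (additionIdeal R G) (X i) * Ideal.Quotient.mk (additionIdeal R G) (X j) =
      Ideal.Quotient.mk (additionIdeal R G) (X 0) *
        Ideal.Quotient.mk (additionIdeal R G) (X (i + j)) := by
  simp only [← map_mul]
  exact Ideal.Quotient.eq.mpr (additionIdeal_le_iff.mp le_rfl i j)

theorem prod_X_pow_sub_prod_X_pow_mem_additionIdeal [Fintype G] [AddCommMonoid G]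
    {u v : G → ℕ} (degree_eq : ∑ g, u g = ∑ g, v g)
    (weight_eq : ∑ g, u g • g = ∑ g, v g • g) :
    ∏ g, X g ^ u g - ∏ g, X g ^ v g ∈ additionIdeal R G := by
  rw [← Ideal.Quotient.eq]
  simp only [map_prod, map_pow]
  exact prod_pow_eq_of_degree_eq_of_weight_eq mk_X_mul_mk_X_additionIdeal degree_eq weight_eq

end AdditionIdeal

section AffineRelations

/-- The lattice `{w | ∑ w_g = 0, ∑ w_g • g = 0}` of affine relations between the elements of a
finite abelian group, encoded as the linear relations between the points `(1, g)` of `ℤ × G`. -/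
def affineRelations (G : Type*) [Fintype G] [AddCommGroup G] : Submodule ℤ (G → ℤ) :=
  LinearMap.ker (Fintype.linearCombination ℤ fun g : G => ((1 : ℤ), g))

variable {G : Type*} [Fintype G] [AddCommGroup G]

theorem mem_affineRelations {w : G → ℤ} :
    w ∈ affineRelations G ↔ ∑ g, w g = 0 ∧ ∑ g, w g • g = 0 := by
  simp [affineRelations, Fintype.linearCombination_apply, Prod.ext_iff, Prod.fst_sum, Prod.snd_sum]

theorem cast_sub_cast_mem_affineRelations_iff {u v : G → ℕ} :
    ((fun g => (u g : ℤ)) - fun g => (v g : ℤ)) ∈ affineRelations G ↔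
      ∑ g, u g = ∑ g, v g ∧ ∑ g, u g • g = ∑ g, v g • g := by
  simp only [mem_affineRelations, Pi.sub_apply, sub_smul, Finset.sum_sub_distrib, sub_eq_zero,
    natCast_zsmul]
  norm_cast

theorem sum_smul_eq_zero_of_mem_affineRelations {A : Type*} [AddCommGroup A] {e : G → A}
    (he : ∀ i j, e i + e j = e 0 + e (i + j)) {w : G → ℤ}
    (hw : w ∈ affineRelations G) : ∑ g, w g • e g = 0 := by
  obtain ⟨degree_eq, weight_eq⟩ := mem_affineRelations.mp hw
  let shift : G →+ A := AddMonoidHom.mk' (fun g => e g - e 0) fun i j => by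
    rw [eq_sub_of_add_eq' (he i j).symm]; abel
  calc ∑ g, w g • e g = ∑ g, w g • (e 0 + shift g) := by simp [shift]
    _ = (∑ g, w g) • e 0 + shift (∑ g, w g • g) := by
      simp only [smul_add, Finset.sum_add_distrib, Finset.sum_smul, map_sum, map_zsmul]
    _ = 0 := by rw [degree_eq, weight_eq, zero_smul, map_zero, add_zero]

theorem latticeIdeal_affineRelations (K : Type*) [Field K] (n : ℕ) [NeZero n] :
    latticeIdeal n K (affineRelations (Fin n)) = additionIdeal K (Fin n) := by
  refine le_antisymm (Ideal.span_le.mpr ?_) (additionIdeal_le_iff.mpr fun i j => ?_)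
  · rintro _ ⟨u, v, huv, rfl⟩
    obtain ⟨degree_eq, weight_eq⟩ := cast_sub_cast_mem_affineRelations_iff.mp huv
    exact prod_X_pow_sub_prod_X_pow_mem_additionIdeal degree_eq weight_eq
  · have X_mul_X (k l : Fin n) : (X k * X l : MvPolynomial (Fin n) K) =
        ∏ g, X g ^ (Pi.single k 1 + Pi.single l 1 : Fin n → ℕ) g := by
      simp only [Pi.add_apply, pow_add, Finset.prod_mul_distrib]
      simp [Pi.single_apply, pow_ite]
    refine Ideal.subset_span ⟨Pi.single i 1 + Pi.single j 1, Pi.single 0 1 + Pi.single (i + j) 1,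
      cast_sub_cast_mem_affineRelations_iff.mpr ?_, by rw [X_mul_X, X_mul_X]⟩
    simp [add_smul, Finset.sum_add_distrib, Pi.single_apply, ite_smul]

end AffineRelations

section CycleLaplacian

variable {n : ℕ} [NeZero n]

theorem cycLap_eq_single (hn : 3 ≤ n) (j : Fin n) :
    cycLap n j = Pi.single j 1 + Pi.single j 1 - (Pi.single (j - 1) 1 + Pi.single (j + 1) 1) := by
  have one_add_one_ne_zero : (1 : Fin n) + 1 ≠ 0 := by
    simp [Fin.ext_iff, Fin.val_add, Nat.mod_eq_of_lt (show 2 < n by omega)]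
  have pred_ne_succ : j - 1 ≠ j + 1 := fun h => one_add_one_ne_zero <| by
    simpa [sub_eq_iff_eq_add, add_assoc] using h
  ext l
  simp only [cycLap, ← sub_eq_iff_eq_add, Pi.add_apply, Pi.sub_apply, Pi.single_apply]
  grind

theorem span_cycLap_eq_affineRelations (hn : 3 ≤ n) :
    Submodule.span ℤ (Set.range (cycLap n)) = affineRelations (Fin n) := by
  refine le_antisymm (Submodule.span_le.mpr ?_) fun w hw => ?_
  · rintro _ ⟨j, rfl⟩
    simp [mem_affineRelations, cycLap_eq_single hn, sub_smul, add_smul, Finset.sum_add_distrib,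
      Pi.single_apply, ite_smul]
  · set L := Submodule.span ℤ (Set.range (cycLap n))
    let e (j : Fin n) : (Fin n → ℤ) ⧸ L := L.mkQ (Pi.single j 1)
    have midpoint (j : Fin n) : e j + e j = e (j - 1) + e (j + 1) := by
      rw [← sub_eq_zero, ← map_add, ← map_add, ← map_sub, ← cycLap_eq_single hn]
      exact (Submodule.Quotient.mk_eq_zero L).mpr (Submodule.subset_span ⟨j, rfl⟩)
    rw [← Submodule.Quotient.mk_eq_zero, ← Submodule.mkQ_apply, pi_eq_sum_univ' w, map_sum]
    simp only [map_smul]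
    exact sum_smul_eq_zero_of_mem_affineRelations (apply_add_apply_eq_of_midpoint midpoint) hw

end CycleLaplacian

section RationalNormalCurve

theorem xIdx_val_add_one {n : ℕ} (k : Fin n) : xIdx n (k + 1) = k.castSucc := by
  ext; simp [xIdx]

theorem xIdx_val_add_two {n : ℕ} (k : Fin n) : xIdx n (k + 2) = k.succ := by
  ext; simp [xIdx]

theorem Pideal_eq_span_minors (K : Type*) [Field K] (n : ℕ) :
    Pideal n K = Ideal.span {f | ∃ i j : Fin n,
      f = X i.succ * X j.castSucc - X i.castSucc * X j.succ} := by
  have minor_mem {i j : Fin n} (hij : i < j) :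
      (X i.succ * X j.castSucc - X i.castSucc * X j.succ : MvPolynomial (Fin (n + 1)) K) ∈
        Pideal n K := by
    refine Ideal.subset_span ⟨i + 2, j + 1, by omega, by omega, by omega, ?_⟩
    rw [← xIdx_val_add_two, ← xIdx_val_add_one, ← xIdx_val_add_two, ← xIdx_val_add_one]
    rfl
  refine le_antisymm (Ideal.span_mono ?_) (Ideal.span_le.mpr ?_)
  · rintro _ ⟨i, j, hi, hij, hj, rfl⟩
    obtain ⟨i, rfl⟩ := Nat.exists_eq_add_of_le' hi
    obtain ⟨j, rfl⟩ := Nat.exists_eq_add_of_le' (show 1 ≤ j by omega)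
    refine ⟨⟨i, by omega⟩, ⟨j, by omega⟩, ?_⟩
    rw [← xIdx_val_add_two, ← xIdx_val_add_one, ← xIdx_val_add_two, ← xIdx_val_add_one]
    rfl
  · rintro _ ⟨i, j, rfl⟩
    rcases lt_trichotomy i j with hij | rfl | hji
    · exact minor_mem hij
    · simp [mul_comm]
    · have columns_swapped := neg_mem (minor_mem hji)
      rwa [neg_sub, mul_comm (X j.castSucc), mul_comm (X j.succ)] at columns_swapped

/-- The map on indices underlying `φ : R_{n+1} → R_n`: reduction of `{0, …, n}` modulo `n`, which
only identifies the last index with `0`. -/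
def wrapIndex (n : ℕ) [NeZero n] (l : Fin (n + 1)) : Fin n :=
  Fin.ofNat n l

variable {n : ℕ} [NeZero n]

@[simp]
theorem wrapIndex_castSucc (i : Fin n) : wrapIndex n i.castSucc = i := by
  simp [wrapIndex]

@[simp]
theorem wrapIndex_succ (i : Fin n) : wrapIndex n i.succ = i + 1 := by
  ext; simp [wrapIndex, Fin.val_add]

theorem map_rename_wrapIndex_span_last_sub_zero (R : Type*) [CommRing R] :
    (Ideal.span {X (Fin.last n) - X 0}).map (rename (R := R) (wrapIndex n)) = ⊥ := by
  simp [Ideal.map_span, wrapIndex]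

theorem aeval_X_eq_rename_wrapIndex (R : Type*) [CommSemiring R] (hn : 0 < n) :
    aeval (R := R) (fun l : Fin (n + 1) =>
      if h : (l : ℕ) < n then (X ⟨l, h⟩ : MvPolynomial (Fin n) R) else X ⟨0, hn⟩) =
    rename (wrapIndex n) := by
  ext1 l
  induction l using Fin.lastCases with
  | last => simp [wrapIndex]
  | cast i => simp

/-- The ideal of `R[x_i : i ∈ ℤ/n]` generated by the `2 × 2` minors of the `2 × n` matrix with rows
`(x_0, …, x_{n-1})` and `(x_1, …, x_{n-1}, x_0)`. -/
def cyclicMinorIdeal (R : Type*) [CommRing R] (n : ℕ) [NeZero n] :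
    Ideal (MvPolynomial (Fin n) R) :=
  Ideal.span {f | ∃ i j : Fin n, f = X (i + 1) * X j - X i * X (j + 1)}

theorem map_rename_wrapIndex_Pideal (K : Type*) [Field K] :
    (Pideal n K).map (rename (R := K) (wrapIndex n)) = cyclicMinorIdeal K n := by
  rw [Pideal_eq_span_minors, Ideal.map_span, cyclicMinorIdeal]
  congr 1
  ext f
  simp [Set.mem_image, eq_comm]

theorem cyclicMinorIdeal_eq_additionIdeal (R : Type*) [CommRing R] :
    cyclicMinorIdeal R n = additionIdeal R (Fin n) := by
  refine le_antisymm (Ideal.span_le.mpr ?_) (additionIdeal_le_iff.mpr fun i j => ?_)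
  · rintro _ ⟨i, j, rfl⟩
    rw [SetLike.mem_coe, ← Ideal.Quotient.eq, map_mul, map_mul, mk_X_mul_mk_X_additionIdeal,
      mk_X_mul_mk_X_additionIdeal i, add_assoc, add_comm 1 j]
  · rw [← Ideal.Quotient.eq, map_mul, map_mul]
    refine apply_mul_apply_eq_of_shift
      (y := fun k => Ideal.Quotient.mk (cyclicMinorIdeal R n) (X k)) (fun k l => ?_) i j
    rw [← map_mul, ← map_mul, Ideal.Quotient.eq]
    exact Ideal.subset_span ⟨k, l, rfl⟩

end RationalNormalCurve

/-- The image under `φ : R_{n+1} → R_n`, `φ(x_i) = x_i` (`i ≤ n`),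
`φ(x_{n+1}) = x_1`, of the ideal `P_n + ⟨x_{n+1} - x_1⟩` is the toppling ideal `I_{C_n}`
of the `n`-cycle, i.e. the lattice ideal of the lattice generated by the rows of the
Laplacian matrix of `C_n`. -/
theorem statement_0 (K : Type*) [Field K] (n : ℕ) [NeZero n] (hn : 3 ≤ n) :
    Ideal.map
      (MvPolynomial.aeval (R := K)
        (fun l : Fin (n + 1) =>
          if h : (l : ℕ) < n then (X ⟨(l : ℕ), h⟩ : MvPolynomial (Fin n) K)
          else X ⟨0, by omega⟩) :
        MvPolynomial (Fin (n + 1)) K →ₐ[K] MvPolynomial (Fin n) K)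
      (Pideal n K ⊔ Ideal.span {X (Fin.last n) - X (0 : Fin (n + 1))})
      = latticeIdeal n K (Submodule.span ℤ (Set.range (cycLap n))) := by
  rw [aeval_X_eq_rename_wrapIndex K (by omega), Ideal.map_sup,
    map_rename_wrapIndex_span_last_sub_zero, sup_bot_eq, map_rename_wrapIndex_Pideal,
    cyclicMinorIdeal_eq_additionIdeal, ← latticeIdeal_affineRelations,
    span_cycLap_eq_affineRelations hn]
end
end

section
/- The K-algebra homomorphism φ : R_{n+1} → R_n with φ(x_i) = x_i for 1 ≤ i ≤ n and φ(x_{n+1}) = x_1 induces a K-algebra isomorphism R_{n+1}/(P_n + ⟨x_{n+1} − x_1⟩) ≅ R_n/I_{C_n}. -/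
noncomputable section

open MvPolynomial

/-!
The Laplacian lattice of the cycle consists of the integer vectors `w` with `∑ wᵢ = 0` and
`∑ i wᵢ = 0` in `ℤ/n`: both functionals are harmonic on the cycle and hence kill the lattice, and
conversely every harmonic function on a cyclic group is a constant plus a homomorphism.
Consequently `I_{C_n}` is generated by the quadrics `x_a x_b - x_0 x_{a+b}`, with indices in `ℤ/n`
counted from `0`, since modulo them every monomial of positive degree takes the form `x_0^d x_c`.

A Hankel relation moves the two indices of a quadratic monomial one step apart. Repeating it until
an index reaches an end, where `x_0` and `x_n` agree, yields exactly those quadrics, so `φ` maps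
`P_n` onto `I_{C_n}`. As `φ` is surjective, the preimage of `I_{C_n}` is `P_n + ker φ`.
-/

section NormalForm

variable {ι A : Type*} [AddCommMonoid ι] [CommMonoid A] {y : ι → A}

theorem prod_map_cons_eq_pow_card_mul (hy : ∀ a b, y a * y b = y 0 * y (a + b)) (a : ι)
    (s : Multiset ι) :
    ((a ::ₘ s).map y).prod = y 0 ^ s.card * y (a ::ₘ s).sum := by
  induction s using Multiset.induction_on with
  | empty => simp
  | cons b s ih =>
    calc ((a ::ₘ b ::ₘ s).map y).prod = y b * ((a ::ₘ s).map y).prod := by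
          rw [Multiset.cons_swap, Multiset.map_cons, Multiset.prod_cons]
      _ = y 0 ^ s.card * (y b * y (a ::ₘ s).sum) := by rw [ih, mul_left_comm]
      _ = y 0 ^ (b ::ₘ s).card * y (a ::ₘ b ::ₘ s).sum := by
          rw [hy, ← mul_assoc, ← pow_succ, Multiset.card_cons, Multiset.cons_swap,
            Multiset.sum_cons b]

theorem prod_map_eq_prod_map (hy : ∀ a b, y a * y b = y 0 * y (a + b)) {s t : Multiset ι}
    (hcard : s.card = t.card) (hsum : s.sum = t.sum) : (s.map y).prod = (t.map y).prod := by
  cases s using Multiset.induction_on with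
  | empty => rw [Multiset.card_eq_zero.1 hcard.symm]
  | cons a s _ =>
    obtain ⟨b, t, rfl, hcard'⟩ :=
      Multiset.card_eq_succ_iff.1 (hcard.symm.trans (Multiset.card_cons a s))
    rw [prod_map_cons_eq_pow_card_mul hy, prod_map_cons_eq_pow_card_mul hy, ← hcard', hsum]

theorem prod_pow_eq_prod_pow [Fintype ι] (hy : ∀ a b, y a * y b = y 0 * y (a + b))
    {u v : ι → ℕ} (hcard : ∑ i, u i = ∑ i, v i) (hsum : ∑ i, u i • i = ∑ i, v i • i) :
    ∏ i, y i ^ u i = ∏ i, y i ^ v i := by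
  have key := prod_map_eq_prod_map hy (s := ∑ i, Multiset.replicate (u i) i)
    (t := ∑ i, Multiset.replicate (v i) i) (by simpa using hcard)
    (by simpa [Multiset.sum_sum, Multiset.sum_replicate] using hsum)
  simpa only [← Multiset.coe_mapAddMonoidHom, map_sum, Multiset.prod_sum,
    Multiset.mapAddMonoidHom_apply, Multiset.map_replicate, Multiset.prod_replicate] using key

end NormalForm

theorem eq_apply_zero_of_periodic {G β : Type*} [AddGroup G] {t : G} {f : G → β}
    (hf : Function.Periodic f t) (ht : ∀ x, x ∈ AddSubgroup.zmultiples t) (a : G) : f a = f 0 := by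
  obtain ⟨k, rfl⟩ := AddSubgroup.mem_zmultiples_iff.1 (ht a)
  exact hf.zsmul_eq k

theorem exists_addMonoidHom_of_harmonic {G M : Type*} [AddCommGroup G] [AddCommGroup M] {t : G}
    {g : G → M} (ht : ∀ x, x ∈ AddSubgroup.zmultiples t)
    (hg : ∀ a, g (a + t) + g (a - t) = 2 • g a) : ∃ h : G →+ M, ∀ a, h a = g a - g 0 := by
  have step_const (a : G) : g (a + t) - g a = g (0 + t) - g 0 := by
    refine eq_apply_zero_of_periodic (f := fun a => g (a + t) - g a) (fun a => ?_) ht a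
    have harmonic_at := hg (a + t)
    rw [add_sub_cancel_right, two_nsmul] at harmonic_at
    rw [sub_eq_sub_iff_add_eq_add, harmonic_at]
  have shift_const (b a : G) : g (a + b) - g a = g (0 + b) - g 0 := by
    refine eq_apply_zero_of_periodic (f := fun a => g (a + b) - g a) (fun a => ?_) ht a
    have same_step := (step_const (a + b)).trans (step_const a).symm
    rwa [add_right_comm, sub_eq_sub_iff_sub_eq_sub] at same_step
  refine ⟨AddMonoidHom.mk' (fun a => g a - g 0) fun a b => ?_, fun _ => rfl⟩
  have shift_eq : g (a + b) - g a = g b - g 0 := by simpa only [zero_add] using shift_const b a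
  rw [← shift_eq]
  abel

open Fin.CommRing in
theorem fin_mem_zmultiples_one {n : ℕ} [NeZero n] (a : Fin n) :
    a ∈ AddSubgroup.zmultiples (1 : Fin n) :=
  AddSubgroup.mem_zmultiples_iff.2 ⟨a.val, by simp⟩

/-- The Laplacian lattice `L_{C_n} ⊆ ℤ^n` of the cycle, reducible so that the ideal `I_{C_n}` of the
theorem is literally `latticeIdeal n K (cycLattice n)`. -/
abbrev cycLattice (n : ℕ) [NeZero n] : Submodule ℤ (Fin n → ℤ) :=
  Submodule.span ℤ (Set.range (cycLap n))

section Lattice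

variable {n : ℕ} [NeZero n]

theorem cycLap_eq_sub_single (hn : 3 ≤ n) (j : Fin n) :
    cycLap n j = 2 • Pi.single j 1 - Pi.single (j + 1) 1 - Pi.single (j - 1) 1 := by
  have one_ne : (1 : Fin n) ≠ 0 := by
    obtain ⟨m, rfl⟩ := Nat.exists_eq_add_of_le' hn
    simp
  have two_ne : (1 + 1 : Fin n) ≠ 0 := by
    obtain ⟨m, rfl⟩ := Nat.exists_eq_add_of_le' hn
    simp [Fin.ext_iff, Fin.val_add, Nat.mod_eq_of_lt]
  have succ_ne_pred : j + 1 ≠ j - 1 := fun h => two_ne <| by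
    rwa [eq_sub_iff_add_eq, add_assoc, add_eq_left] at h
  funext l
  have pred_iff : j = l + 1 ↔ l = j - 1 := by rw [eq_sub_iff_add_eq, eq_comm]
  simp only [cycLap, pred_iff, Pi.sub_apply, Pi.smul_apply, Pi.single_apply]
  grind

theorem sum_smul_eq_zero_of_mem_cycLattice (hn : 3 ≤ n) {M : Type*} [AddCommGroup M]
    {g : Fin n → M} (hg : ∀ j, g (j + 1) + g (j - 1) = 2 • g j) {w : Fin n → ℤ}
    (hw : w ∈ cycLattice n) : ∑ i, w i • g i = 0 := by
  have le_ker : cycLattice n ≤ LinearMap.ker (Fintype.linearCombination ℤ g) := by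
    refine Submodule.span_le.2 (Set.range_subset_iff.2 fun j => LinearMap.mem_ker.2 ?_)
    simp only [cycLap_eq_sub_single hn, map_sub, map_nsmul,
      Fintype.linearCombination_apply_single, one_smul]
    rw [← hg]
    abel
  exact le_ker hw

theorem mem_cycLattice_iff (hn : 3 ≤ n) {w : Fin n → ℤ} :
    w ∈ cycLattice n ↔ ∑ i, w i = 0 ∧ ∑ i, w i • i = 0 := by
  refine ⟨fun hw => ⟨?_, ?_⟩, fun ⟨hdeg, hsum⟩ => ?_⟩
  · simpa using sum_smul_eq_zero_of_mem_cycLattice hn (g := fun _ => (1 : ℤ))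
      (fun _ => rfl) hw
  · exact sum_smul_eq_zero_of_mem_cycLattice hn (g := id)
      (fun j => by simp only [id]; abel) hw
  · -- Modulo the lattice, the standard basis vectors are a harmonic function of their index.
    let g (i : Fin n) : (Fin n → ℤ) ⧸ cycLattice n := (cycLattice n).mkQ (Pi.single i 1)
    have hg (j : Fin n) : g (j + 1) + g (j - 1) = 2 • g j := by
      have hj : (cycLattice n).mkQ (cycLap n j) = 0 :=
        (Submodule.Quotient.mk_eq_zero _).2 (Submodule.subset_span ⟨j, rfl⟩)
      rw [cycLap_eq_sub_single hn, map_sub, map_sub, map_nsmul, sub_sub, sub_eq_zero] at hj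
      exact hj.symm
    obtain ⟨h, h_eq⟩ := exists_addMonoidHom_of_harmonic fin_mem_zmultiples_one hg
    rw [← Submodule.Quotient.mk_eq_zero, ← Submodule.mkQ_apply]
    calc (cycLattice n).mkQ w = ∑ i, w i • g i := by
          simp only [g, ← map_zsmul, ← map_sum, ← Pi.single_smul, smul_eq_mul, mul_one,
            Finset.univ_sum_single]
      _ = ∑ i, w i • h i + (∑ i, w i) • g 0 := by
          simp only [h_eq, smul_sub, Finset.sum_sub_distrib, Finset.sum_smul, sub_add_cancel]
      _ = h (∑ i, w i • i) + (∑ i, w i) • g 0 := by simp only [map_sum, map_zsmul]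
      _ = 0 := by rw [hsum, hdeg, map_zero, zero_smul, add_zero]

end Lattice

section LatticeIdeal

variable {n : ℕ} [NeZero n] {K : Type*} [Field K]

theorem quadric_mem_latticeIdeal (hn : 3 ≤ n) {a b c d : Fin n} (h : a + b = c + d) :
    (X a * X b - X c * X d : MvPolynomial (Fin n) K) ∈ latticeIdeal n K (cycLattice n) := by
  have prod_pow_single (p q : Fin n) :
      ∏ i, X i ^ (Pi.single p 1 + Pi.single q 1 : Fin n → ℕ) i =
        (X p * X q : MvPolynomial (Fin n) K) := by
    simp only [Pi.add_apply, pow_add, Finset.prod_mul_distrib, Pi.single_apply, pow_ite,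
      pow_one, pow_zero, Finset.prod_ite_eq', Finset.mem_univ, if_true]
  rw [← prod_pow_single a b, ← prod_pow_single c d]
  refine Ideal.subset_span ⟨_, _, (mem_cycLattice_iff hn).2 ⟨?_, ?_⟩, rfl⟩
  · simp [Finset.sum_add_distrib, Pi.single_apply]
  · simp [sub_smul, add_smul, Finset.sum_add_distrib, Pi.single_apply, h]

theorem latticeIdeal_cycLattice_eq_span (hn : 3 ≤ n) :
    latticeIdeal n K (cycLattice n) =
      Ideal.span (Set.range fun p : Fin n × Fin n =>
        X p.1 * X p.2 - X 0 * X (p.1 + p.2)) := by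
  apply le_antisymm
  · set Q : Ideal (MvPolynomial (Fin n) K) := Ideal.span _
    refine Ideal.span_le.2 ?_
    rintro _ ⟨u, v, huv, rfl⟩
    obtain ⟨hdeg, hsum⟩ := (mem_cycLattice_iff hn).1 huv
    simp only [Pi.sub_apply, Finset.sum_sub_distrib, sub_eq_zero, sub_smul, natCast_zsmul]
      at hdeg hsum
    refine Ideal.Quotient.eq.1 ?_
    simp only [map_prod, map_pow]
    refine prod_pow_eq_prod_pow (y := fun i => Ideal.Quotient.mk Q (X i)) (fun a b => ?_)
      (mod_cast hdeg) hsum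
    simp only [← map_mul]
    exact Ideal.Quotient.eq.2 (Ideal.subset_span ⟨(a, b), rfl⟩)
  · refine Ideal.span_le.2 (Set.range_subset_iff.2 fun p => ?_)
    exact quadric_mem_latticeIdeal hn (zero_add _).symm

end LatticeIdeal

section Hankel

variable {A : Type*} {n : ℕ}

theorem hankel_mul_shift [Mul A] {z : ℕ → A}
    (hz : ∀ i j, i ≤ j → j + 2 ≤ n → z (i + 1) * z (j + 1) = z i * z (j + 2)) (k : ℕ) {a b : ℕ}
    (hab : a + k ≤ b) (hb : b + k ≤ n) : z (a + k) * z b = z a * z (b + k) := by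
  induction k generalizing b with
  | zero => rfl
  | succ k ih =>
    obtain ⟨b, rfl⟩ : ∃ b', b = b' + 1 := ⟨b - 1, by omega⟩
    calc z (a + k + 1) * z (b + 1) = z (a + k) * z (b + 2) := hz (a + k) b (by omega) (by omega)
      _ = z a * z (b + 2 + k) := ih (by omega) (by omega)
      _ = z a * z (b + 1 + (k + 1)) := by rw [show b + 2 + k = b + 1 + (k + 1) by omega]

theorem fin_ofNat_add_ofNat [NeZero n] (a b : ℕ) :
    Fin.ofNat n a + Fin.ofNat n b = Fin.ofNat n (a + b) := by
  simp [Fin.ext_iff, Fin.val_add]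

theorem mul_eq_apply_zero_mul_of_hankel [CommMagma A] [NeZero n] {y : Fin n → A}
    (hy : ∀ i j, i ≤ j → j + 2 ≤ n → y (Fin.ofNat n (i + 1)) * y (Fin.ofNat n (j + 1)) =
      y (Fin.ofNat n i) * y (Fin.ofNat n (j + 2))) (a b : Fin n) :
    y a * y b = y 0 * y (a + b) := by
  wlog hab : a ≤ b generalizing a b
  · rw [mul_comm, this b a (le_of_not_ge hab), add_comm]
  have shift := hankel_mul_shift (z := fun k => y (Fin.ofNat n k)) hy
  have ofNat_add : Fin.ofNat n (a + b) = a + b := by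
    rw [← fin_ofNat_add_ofNat, Fin.ofNat_val_eq_self, Fin.ofNat_val_eq_self]
  rcases le_total (a + b : ℕ) n with h | h
  · have head_zero := shift a (a := 0) (b := b) (by simpa using hab) (by omega)
    simpa [← ofNat_add, add_comm] using head_zero
  · have tail_last := shift (n - b) (a := a + b - n) (b := b) (by omega) (by omega)
    have ofNat_sub : Fin.ofNat n (a + b - n) = a + b := by
      rw [← ofNat_add, ← Nat.sub_add_cancel h, ← fin_ofNat_add_ofNat, Fin.ofNat_self, add_zero,
        Nat.add_sub_cancel]
    rw [show (a + b - n + (n - b) : ℕ) = a by omega, show (b + (n - b) : ℕ) = n by omega,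
      ofNat_sub, Fin.ofNat_self] at tail_last
    simpa [mul_comm] using tail_last

end Hankel

theorem ker_rename_of_rightInverse {σ τ R : Type*} [CommRing R] {f : σ → τ} {g : τ → σ}
    (hfg : Function.RightInverse g f) :
    RingHom.ker (rename f : MvPolynomial σ R →ₐ[R] MvPolynomial τ R) =
      Ideal.span (Set.range fun i => X i - X (g (f i))) := by
  apply le_antisymm
  · set I : Ideal (MvPolynomial σ R) := Ideal.span _
    have mk_section : ((Ideal.Quotient.mkₐ R I).comp (rename g)).comp (rename f) =
        Ideal.Quotient.mkₐ R I := by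
      ext1 i
      have mem : X i - X (g (f i)) ∈ I := Ideal.subset_span ⟨i, rfl⟩
      simpa using (Ideal.Quotient.eq.2 mem).symm
    intro p hp
    rw [RingHom.mem_ker] at hp
    have mk_section_p := DFunLike.congr_fun mk_section p
    rw [← Ideal.Quotient.eq_zero_iff_mem, ← Ideal.Quotient.mkₐ_eq_mk R, ← mk_section_p,
      AlgHom.comp_apply, hp, map_zero]
  · refine Ideal.span_le.2 (Set.range_subset_iff.2 fun i => ?_)
    simp [hfg (f i)]

/-- The map `φ : R_{n+1} → R_n` identifying the two end variables: reducing the zero-based index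
modulo `n` fixes `x_1, …, x_n` and sends `x_{n+1}` to `x_1`. -/
def foldEnds (n : ℕ) [NeZero n] (R : Type*) [CommSemiring R] :
    MvPolynomial (Fin (n + 1)) R →ₐ[R] MvPolynomial (Fin n) R :=
  rename fun l => Fin.ofNat n l

section FoldEnds

variable {n : ℕ} [NeZero n]

section CommSemiring

variable {R : Type*} [CommSemiring R]

theorem foldEnds_eq_aeval :
    foldEnds n R = aeval fun l : Fin (n + 1) =>
      if h : (l : ℕ) < n then X ⟨l, h⟩ else X ⟨0, NeZero.pos n⟩ := by
  ext1 l
  rw [foldEnds, rename_X, aeval_X]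
  split_ifs with h
  · simp [Fin.ofNat, Nat.mod_eq_of_lt h]
  · simp [Fin.ofNat, show (l : ℕ) = n by omega]

theorem foldEnds_surjective : Function.Surjective (foldEnds n R) :=
  rename_surjective _ fun l => ⟨l.castSucc, by simp⟩

theorem foldEnds_X_xIdx {m : ℕ} (hm : m ≤ n + 1) :
    foldEnds n R (X (xIdx n m)) = X (Fin.ofNat n (m - 1)) := by
  simp only [foldEnds, rename_X, xIdx, Nat.mod_eq_of_lt (show m - 1 < n + 1 by omega)]

end CommSemiring

theorem ker_foldEnds {R : Type*} [CommRing R] :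
    RingHom.ker (foldEnds n R) = Ideal.span {X (Fin.last n) - X 0} := by
  have section_castSucc : Function.RightInverse Fin.castSucc
      (fun l : Fin (n + 1) => Fin.ofNat n l) := fun l => by simp
  rw [foldEnds, ker_rename_of_rightInverse section_castSucc]
  apply le_antisymm <;> rw [Ideal.span_le]
  · refine Set.range_subset_iff.2 fun l => ?_
    induction l using Fin.lastCases with
    | last => exact Ideal.subset_span (by simp)
    | cast l => simp
  · exact Set.singleton_subset_iff.2 (Ideal.subset_span ⟨Fin.last n, by simp⟩)

variable {K : Type*} [Field K]

theorem map_foldEnds_Pideal (hn : 3 ≤ n) :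
    (Pideal n K).map (foldEnds n K) = latticeIdeal n K (cycLattice n) := by
  apply le_antisymm
  · refine Ideal.map_le_iff_le_comap.2 (Ideal.span_le.2 ?_)
    rintro _ ⟨i, j, hi, hij, hj, rfl⟩
    rw [SetLike.mem_coe, Ideal.mem_comap, map_sub, map_mul, map_mul,
      foldEnds_X_xIdx (by omega), foldEnds_X_xIdx (by omega), foldEnds_X_xIdx (by omega),
      foldEnds_X_xIdx (by omega)]
    apply quadric_mem_latticeIdeal hn
    rw [fin_ofNat_add_ofNat, fin_ofNat_add_ofNat]
    congr 1
    omega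
  · rw [latticeIdeal_cycLattice_eq_span hn]
    refine Ideal.span_le.2 (Set.range_subset_iff.2 fun p => Ideal.Quotient.eq.1 ?_)
    simp only [map_mul]
    refine mul_eq_apply_zero_mul_of_hankel (y := fun l => Ideal.Quotient.mk _ (X l))
      (fun i j hij hj => ?_) p.1 p.2
    simp only [← map_mul]
    refine Ideal.Quotient.eq.2 ?_
    have hankel_mem : X (xIdx n (i + 2)) * X (xIdx n (j + 2)) -
        X (xIdx n (i + 1)) * X (xIdx n (j + 3)) ∈ Pideal n K :=
      Ideal.subset_span ⟨i + 2, j + 2, by omega, by omega, hj, rfl⟩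
    simpa (disch := omega) [foldEnds_X_xIdx] using
      Ideal.mem_map_of_mem (foldEnds n K) hankel_mem

theorem comap_foldEnds_latticeIdeal (hn : 3 ≤ n) :
    (latticeIdeal n K (cycLattice n)).comap (foldEnds n K) =
      Pideal n K ⊔ Ideal.span {X (Fin.last n) - X 0} := by
  rw [← map_foldEnds_Pideal hn, Ideal.comap_map_of_surjective' (foldEnds n K) foldEnds_surjective,
    ker_foldEnds]

end FoldEnds

/-- The map `φ : R_{n+1} → R_n`, `φ(x_i) = x_i` (`i ≤ n`), `φ(x_{n+1}) = x_1`,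
induces a `K`-algebra isomorphism `R_{n+1}/(P_n + ⟨x_{n+1} - x_1⟩) ≅ R_n/I_{C_n}`. -/
theorem statement_2 (K : Type*) [Field K] (n : ℕ) [NeZero n] (hn : 3 ≤ n) :
    ∃ e : (MvPolynomial (Fin (n + 1)) K ⧸
            (Pideal n K ⊔ Ideal.span {X (Fin.last n) - X (0 : Fin (n + 1))})) ≃ₐ[K]
          (MvPolynomial (Fin n) K ⧸
            latticeIdeal n K (Submodule.span ℤ (Set.range (cycLap n)))),
      ∀ f : MvPolynomial (Fin (n + 1)) K,
        e (Ideal.Quotient.mk _ f) =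
          Ideal.Quotient.mk _
            (MvPolynomial.aeval (R := K)
              (fun l : Fin (n + 1) =>
                if h : (l : ℕ) < n then (X ⟨(l : ℕ), h⟩ : MvPolynomial (Fin n) K)
                else X ⟨0, by omega⟩) f) := by
  have surj : Function.Surjective
      ((Ideal.Quotient.mkₐ K (latticeIdeal n K (cycLattice n))).comp (foldEnds n K)) :=
    (Ideal.Quotient.mkₐ_surjective K _).comp foldEnds_surjective
  have ker_eq : Pideal n K ⊔ Ideal.span {X (Fin.last n) - X 0} = RingHom.ker
      ((Ideal.Quotient.mkₐ K (latticeIdeal n K (cycLattice n))).comp (foldEnds n K)) := by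
    rw [← comap_foldEnds_latticeIdeal hn]
    ext f
    simp [Ideal.Quotient.eq_zero_iff_mem]
  refine ⟨(Ideal.quotientEquivAlgOfEq K ker_eq).trans
    (Ideal.quotientKerAlgEquivOfSurjective surj), fun f => ?_⟩
  rw [← foldEnds_eq_aeval]
  rfl
end
end

section
/- Let (C_n,Π) be a parcycle with Π = {V_1,…,V_k}, k ≥ 2, such that |V_i| ≥ 2 for some i. Then the matrix A_{(C_n,Π)} is 1-generic: for every (c_1,c_2) ∈ K² with (c_1,c_2) ≠ (0,0) and every (a_1,…,a_k) ∈ K^k, if Σ_{i=1}^k a_i (c_1 A_{1,i} + c_2 A_{2,i}) = 0 in R_n, then a_i = 0 for all i (equivalently, every generalized entry of A_{(C_n,Π)} is nonzero). -/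
noncomputable section

open MvPolynomial

/- Over a domain, the coefficient family `b` of a vanishing combination
`∑ b x • (c₁ • v x + c₂ • v (s x))` satisfies `c₁ * b (s x) + c₂ * b x = 0`. Hence the zero set of
`b` is invariant under `s`, and one zero in a cycle of `s` forces `b` to vanish on that whole cycle.
For the `n`-cycle, `s` is the rotation `x ↦ x + 1`, and the zero comes from two adjacent vertices in
the same part: the first one is the tail of no relevant edge. -/

section Perm

variable {R σ : Type*} {s : Equiv.Perm σ}

theorem of_sameCycle_of_forall_apply_iff {P : σ → Prop} (hP : ∀ x, P (s x) ↔ P x) {x y : σ}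
    (hxy : s.SameCycle x y) (hx : P x) : P y := by
  obtain ⟨m, rfl⟩ := hxy
  simpa only [Equiv.Perm.subtypePerm_zpow, Equiv.Perm.subtypePerm_apply] using
    ((s.subtypePerm hP ^ m) ⟨x, hx⟩).2

theorem apply_perm_eq_zero_iff_of_mul_add_mul_eq_zero [NonUnitalNonAssocSemiring R]
    [NoZeroDivisors R] {c₁ c₂ : R} (hc : (c₁, c₂) ≠ (0, 0)) {b : σ → R}
    (hb : ∀ x, c₁ * b (s x) + c₂ * b x = 0) (x : σ) : b (s x) = 0 ↔ b x = 0 := by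
  by_cases h₁ : c₁ = 0
  · have h₂ : c₂ ≠ 0 := by rintro rfl; exact hc (by rw [h₁])
    have hzero (y : σ) : b y = 0 := by simpa [h₁, h₂] using hb y
    simp only [hzero]
  by_cases h₂ : c₂ = 0
  · have hzero (y : σ) : b (s y) = 0 := by simpa [h₁, h₂] using hb y
    have hx : b x = 0 := by simpa only [s.apply_symm_apply] using hzero (s.symm x)
    simp only [hzero, hx]
  constructor <;> intro h <;> simpa [h, h₁, h₂] using hb x

variable {M ι : Type*} [CommRing R] [NoZeroDivisors R] [AddCommGroup M] [Module R M]

theorem linearIndependent_smul_add_smul_perm {v : σ → M} (hv : LinearIndependent R v)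
    {p : ι → σ} (hp : Function.Injective p) (hmiss : ∀ x, ∃ y ∉ Set.range p, s.SameCycle y x)
    {c₁ c₂ : R} (hc : (c₁, c₂) ≠ (0, 0)) :
    LinearIndependent R fun i => c₁ • v (p i) + c₂ • v (s (p i)) := by
  refine linearIndependent_iff.mpr fun a ha => ?_
  set b : σ →₀ R := a.mapDomain p with hb_def
  have hcomb : c₁ • b + c₂ • b.mapDomain s = 0 := by
    refine linearIndependent_iff.mp hv _ ?_
    rw [← ha, hb_def, ← Finsupp.mapDomain_comp, map_add, map_smul, map_smul,
      Finsupp.linearCombination_mapDomain, Finsupp.linearCombination_mapDomain]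
    simp only [Finsupp.linearCombination_apply, Finsupp.smul_sum, smul_add, Finsupp.sum_add,
      Function.comp_apply, smul_comm c₁, smul_comm c₂]
  have hrec (x : σ) : c₁ * b (s x) + c₂ * b x = 0 := by
    simpa [Finsupp.mapDomain_apply s.injective] using DFunLike.congr_fun hcomb (s x)
  have hb (x : σ) : b x = 0 := by
    obtain ⟨y, hy, hyx⟩ := hmiss x
    have hby : b y = 0 := Finsupp.mapDomain_of_notMem_range a y hy
    exact of_sameCycle_of_forall_apply_iff (P := (b · = 0))
      (apply_perm_eq_zero_iff_of_mul_add_mul_eq_zero hc hrec) hyx hby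
  ext i
  rw [← Finsupp.mapDomain_apply hp, ← hb_def, hb, Finsupp.zero_apply]

end Perm

section Cycle

variable {n : ℕ} [NeZero n]

theorem sameCycle_addRight_one (x y : Fin n) :
    (Equiv.addRight (1 : Fin n)).SameCycle x y := by
  refine ⟨((y - x : Fin n) : ℕ), ?_⟩
  rw [zpow_natCast, ← Equiv.Perm.iterate_eq_pow, Equiv.coe_addRight, add_right_iterate_apply]
  open Fin.NatCast in
  rw [nsmul_one, Fin.cast_val_eq_self, add_sub_cancel]

theorem exists_mem_add_one_mem_of_preconnected_cycleG {S : Set (Fin n)}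
    (hconn : ((cycleG n).induce S).Preconnected) (hS : S.Nontrivial) : ∃ x ∈ S, x + 1 ∈ S := by
  have := hS.coe_sort
  obtain ⟨u, hu⟩ := hS.nonempty
  obtain ⟨⟨w, hw⟩, huw⟩ := hconn.exists_adj_of_nontrivial ⟨u, hu⟩
  rw [SimpleGraph.induce_adj, cycleG, SimpleGraph.fromRel_adj] at huw
  obtain ⟨-, rfl | rfl⟩ := huw
  · exact ⟨u, hu, hw⟩
  · exact ⟨w, hw, hu⟩

/-- `1`-genericity, read as linear independence of `c₁ A₁ + c₂ A₂` for the rows `A₁`, `A₂`; the set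
`S` stands for a part with at least two vertices, and the `p i` for tails of relevant edges. -/
theorem statement_3_general {R κ : Type*} [CommRing R] [NoZeroDivisors R] {S : Set (Fin n)}
    (hconn : ((cycleG n).induce S).Preconnected) (hS : S.Nontrivial) {p : κ → Fin n}
    (hp : Function.Injective p) (hcross : ∀ i, p i ∈ S → p i + 1 ∉ S)
    {c₁ c₂ : R} (hc : (c₁, c₂) ≠ (0, 0)) :
    LinearIndependent R
      fun i => (C c₁ * X (p i) + C c₂ * X (p i + 1) : MvPolynomial (Fin n) R) := by
  obtain ⟨x₀, hx₀, hx₀'⟩ := exists_mem_add_one_mem_of_preconnected_cycleG hconn hS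
  have hmiss : x₀ ∉ Set.range p := by
    rintro ⟨i, rfl⟩
    exact hcross i hx₀ hx₀'
  simpa only [C_mul', Equiv.coe_addRight] using
    linearIndependent_smul_add_smul_perm (linearIndependent_X _ _) hp
      (fun x => ⟨x₀, hmiss, sameCycle_addRight_one x₀ x⟩) hc

end Cycle

/-- For a parcycle `(C_n, Π)` with some part of size at least two, the
associated `2 × k` matrix `A_{(C_n,Π)}` (columns given by the directed relevant edges
`(p_i, q_i)` in traversal order starting at a vertex of the sink part) is `1`-generic. -/
theorem statement_3 (K : Type*) [Field K] (n k : ℕ) [NeZero n] (hn : 3 ≤ n) (hk : 2 ≤ k)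
    (V : Fin k → Set (Fin n))
    (hcover : ∀ x : Fin n, ∃ j, x ∈ V j)
    (hdisj : ∀ j₁ j₂ : Fin k, j₁ ≠ j₂ → Disjoint (V j₁) (V j₂))
    (hconn : ∀ j, ((cycleG n).induce (V j)).Connected)
    (hsink : (⟨n - 1, by omega⟩ : Fin n) ∈ V ⟨k - 1, by omega⟩)
    (hbig : ∃ j, (V j).Nontrivial)
    (p q : Fin k → Fin n)
    (hpq : ∀ c, q c = p c + 1)
    (hcross : ∀ c j, p c ∈ V j → q c ∉ V j)
    (hall : ∀ x : Fin n, (∃ j, x ∈ V j ∧ x + 1 ∉ V j) → ∃ c, p c = x)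
    (hinjp : Function.Injective p)
    (horder : ∃ v₀, v₀ ∈ V ⟨k - 1, by omega⟩ ∧
      StrictMono fun c : Fin k => ((p c - v₀ : Fin n) : ℕ)) :
    ∀ c₁ c₂ : K, (c₁, c₂) ≠ (0, 0) → ∀ a : Fin k → K,
      (∑ i, C (a i) * (C c₁ * X (p i) + C c₂ * X (q i)) : MvPolynomial (Fin n) K) = 0 →
      ∀ i, a i = 0 := by
  intro c₁ c₂ hc a hsum
  obtain rfl : q = fun i => p i + 1 := funext hpq
  obtain ⟨j, hj⟩ := hbig
  have hindep := statement_3_general (hconn j).preconnected hj hinjp (hcross · j) hc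
  exact Fintype.linearIndependent_iff.mp hindep a (by simpa only [C_mul'] using hsum)
end
end

section
/- Let (C_n,Π) be a parcycle with Π = {V_1,…,V_k}, k ≥ 2, sink V_k, and A = A_{(C_n,Π)}. For every connected-parset S of (C_n,Π) not containing V_k there is a unique pair of column indices i < j of A such that x^{S→S̄} − x^{S̄→S} = −(A_{1,i}A_{2,j} − A_{1,j}A_{2,i}), and the resulting assignment is a bijection from the set of connected-parsets of (C_n,Π) not containing V_k onto the set of 2-element subsets {i,j} of column indices of A; in particular the binomials x^{S→S̄} − x^{S̄→S} are in bijection with the 2×2 minors of A. -/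
noncomputable section

open MvPolynomial

/-!
Deleting a vertex `v₀` from the cycle leaves a path, ordered by the traversal from `v₀`, so the
connected vertex sets avoiding `v₀` are the arcs between two edges `(a, a + 1)` and `(b, b + 1)`
with `a` before `b`. A set is a union of parts exactly when all its boundary edges are relevant:
no other edge changes membership, and each part is connected. Taking `v₀` in the sink, the
connected-parsets avoiding the sink are thus the arcs between two relevant edges. The binomial of
such an arc is `X (a + 1) * X b - X a * X (b + 1)`, the negative of the minor on its two boundary
edges. Finally, a minor determines its pair of columns, by linear independence of monomials.
-/

section Monomials

variable {σ R : Type*}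

theorem X_mul_X_eq_monomial [CommSemiring R] (a b : σ) :
    (X a * X b : MvPolynomial σ R) = monomial (Finsupp.single a 1 + Finsupp.single b 1) 1 := by
  simp only [X, monomial_mul, mul_one]

-- In characteristic two the difference is symmetric, hence the unordered pairs.
theorem sym2_eq_of_monomial_sub_monomial_eq [CommRing R] [Nontrivial R] {u v u' v' : σ →₀ ℕ}
    (huv : u ≠ v)
    (h : monomial u (1 : R) - monomial v 1 = monomial u' 1 - monomial v' 1) :
    s(u, v) = s(u', v') := by
  have hadd : monomial u (1 : R) + monomial v' 1 = monomial v 1 + monomial u' 1 := by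
    linear_combination h
  have := (AddMonoidAlgebra.single_add_single_inj one_ne_zero one_ne_zero).1 hadd
  grind

theorem single_add_single_eq_iff {a b c d : σ} :
    (Finsupp.single a 1 + Finsupp.single b 1 : σ →₀ ℕ) = Finsupp.single c 1 + Finsupp.single d 1 ↔
      s(a, b) = s(c, d) := by
  simp [Finsupp.single_add_single_eq_single_add_single]

theorem sym2_eq_of_X_mul_X_sub_X_mul_X_eq [CommRing R] [Nontrivial R] {a b c d a' b' c' d' : σ}
    (hne : s(a, b) ≠ s(c, d))
    (h : (X a * X b - X c * X d : MvPolynomial σ R) = X a' * X b' - X c' * X d') :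
    s(s(a, b), s(c, d)) = s(s(a', b'), s(c', d')) := by
  simp only [X_mul_X_eq_monomial] at h
  have := sym2_eq_of_monomial_sub_monomial_eq (mt single_add_single_eq_iff.1 hne) h
  rw [Sym2.eq_iff] at this ⊢
  simpa only [single_add_single_eq_iff] using this

end Monomials

theorem sym2_eq_or_of_sym2_add_eq {G : Type*} [AddCancelMonoid G] {e a b a' b' : G}
    (h : s(s(a, b + e), s(b, a + e)) = s(s(a', b' + e), s(b', a' + e))) :
    s(a, b) = s(a', b') ∨ e + e = 0 := by
  have add_self_eq_zero {c d : G} (hcd : c + e = d) (hdc : d + e = c) : e + e = 0 :=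
    add_eq_left.1 (show c + (e + e) = c by rw [← add_assoc, hcd, hdc])
  simp only [Sym2.eq_iff] at h ⊢
  rcases h with ⟨⟨haa', hbb'⟩ | ⟨-, hba'⟩, h⟩ | ⟨⟨hab', hba'⟩ | ⟨haa', -⟩, h⟩
  · exact .inl (.inl ⟨haa', add_right_cancel hbb'⟩)
  · rcases h with ⟨hbb', haa'⟩ | ⟨hba'', -⟩
    · exact .inl (.inl ⟨add_right_cancel haa', hbb'⟩)
    · exact .inr (add_self_eq_zero hba' hba''.symm)
  · exact .inl (.inr ⟨hab', add_right_cancel hba'⟩)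
  · rcases h with ⟨hba', hab'⟩ | ⟨-, haa''⟩
    · exact .inl (.inr ⟨add_right_cancel hab', hba'⟩)
    · exact .inr (add_self_eq_zero haa'' haa'.symm)

theorem subset_biUnion_iff_mem_biUnion {α ι : Type*} {V : ι → Set α}
    (hdisj : Pairwise fun i j ↦ Disjoint (V i) (V j)) {s : ι} {v : α} (hv : v ∈ V s) (T : Set ι) :
    V s ⊆ ⋃ j ∈ T, V j ↔ v ∈ ⋃ j ∈ T, V j := by
  refine ⟨fun h ↦ h hv, fun h ↦ ?_⟩
  obtain ⟨j, hj, hvj⟩ := Set.mem_iUnion₂.1 h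
  obtain rfl : j = s := by_contra fun hjs ↦ Set.disjoint_left.1 (hdisj hjs) hvj hv
  exact Set.subset_biUnion_of_mem hj

section Cycle

variable {n : ℕ} [NeZero n]

theorem fin_val_add_one (t : Fin n) :
    ((t + 1 : Fin n) : ℕ) = if (t : ℕ) + 1 = n then 0 else (t : ℕ) + 1 := by
  have := t.isLt
  split_ifs with h
  · simp [Fin.val_add, h]
  · exact Fin.val_add_one_of_lt' (by omega)

theorem add_one_mem_Ioc_iff {a b t : Fin n} : t + 1 ∈ Set.Ioc a b ↔ t ∈ Set.Ico a b := by
  have := fin_val_add_one t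
  grind

/-- The directed edges of the cycle that leave `S`, each encoded by its source `x` (the edge being
`(x, x + 1)`). The edges entering `S` are `exits Sᶜ`, and the relevant edges of a partition `V`
are `⋃ j, exits (V j)`. -/
def exits (S : Set (Fin n)) : Set (Fin n) :=
  {x | x ∈ S ∧ x + 1 ∉ S}

theorem mem_exits {S : Set (Fin n)} {x : Fin n} : x ∈ exits S ↔ x ∈ S ∧ x + 1 ∉ S :=
  Iff.rfl

theorem mem_exits_compl {S : Set (Fin n)} {x : Fin n} : x ∈ exits Sᶜ ↔ x ∉ S ∧ x + 1 ∈ S := by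
  simp only [mem_exits, Set.mem_compl_iff, not_not]

theorem outVec_eq_indicator (S : Set (Fin n)) (i : Fin n) :
    outVec n S i = (exits Sᶜ).indicator 1 (i - 1) + (exits S).indicator 1 i := by
  classical
  simp only [outVec, Set.indicator_apply, mem_exits, sub_add_cancel]
  split_ifs <;> simp_all

theorem outMono_of_exits_eq_singleton (K : Type*) [Field K] {S : Set (Fin n)} {a b : Fin n}
    (ha : exits Sᶜ = {a}) (hb : exits S = {b}) : outMono n K S = X (a + 1) * X b := by
  classical
  simp only [outMono, outVec_eq_indicator, ha, hb, pow_add, Finset.prod_mul_distrib]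
  simp [Set.indicator_apply, sub_eq_iff_eq_add, pow_ite]

/-- The `2 × 2` minor of the matrix `A_{(C_n, Π)}` on the columns of the directed edges
`(a, a + 1)` and `(b, b + 1)`, in this order. An edge of the oriented cycle is encoded by its
source, so `a = n - 1` stands for the edge closing the cycle. -/
def edgeMinor (R : Type*) [CommRing R] (a b : Fin n) : MvPolynomial (Fin n) R :=
  X a * X (b + 1) - X b * X (a + 1)

theorem sym2_add_one_ne {a b : Fin n} (hab : a ≠ b) : s(a, b + 1) ≠ s(b, a + 1) := by
  rw [Ne, Sym2.eq_iff, not_or]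
  refine ⟨fun h ↦ hab h.1, fun h ↦ ?_⟩
  have hval := fin_val_add_one a
  rw [← h.1] at hval
  split_ifs at hval <;> omega

theorem sym2_eq_of_sym2_add_one_eq {a b a' b' : Fin n} (hab : a ≠ b) (hab' : a' ≠ b')
    (h : s(s(a, b + 1), s(b, a + 1)) = s(s(a', b' + 1), s(b', a' + 1))) : s(a, b) = s(a', b') := by
  refine (sym2_eq_or_of_sym2_add_eq h).elim id fun h2 ↦ ?_
  have hn : n ≤ 2 := by
    have hval₀ := fin_val_add_one (0 : Fin n)
    have hval₁ := fin_val_add_one (1 : Fin n)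
    rw [zero_add, Fin.val_zero] at hval₀
    rw [h2, Fin.val_zero] at hval₁
    split_ifs at hval₀ hval₁ <;> omega
  -- `Fin n` has at most two elements, so any two pairs of distinct elements coincide.
  rw [Sym2.eq_iff]
  omega

theorem sym2_eq_of_edgeMinor_eq (R : Type*) [CommRing R] [Nontrivial R] {a b a' b' : Fin n}
    (hab : a ≠ b) (hab' : a' ≠ b') (h : edgeMinor R a b = edgeMinor R a' b') :
    s(a, b) = s(a', b') :=
  sym2_eq_of_sym2_add_one_eq hab hab' (sym2_eq_of_X_mul_X_sub_X_mul_X_eq (sym2_add_one_ne hab) h)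

theorem cycleG_adj {x y : Fin n} : (cycleG n).Adj x y ↔ x ≠ y ∧ (y = x + 1 ∨ x = y + 1) :=
  SimpleGraph.fromRel_adj _ _ _

theorem exists_mem_exits_of_induce_preconnected {W P : Set (Fin n)}
    (hW : ((cycleG n).induce W).Preconnected) {x y : Fin n} (hxW : x ∈ W) (hyW : y ∈ W)
    (hxP : x ∈ P) (hyP : y ∉ P) : ∃ z ∈ W, z + 1 ∈ W ∧ z ∈ exits P ∪ exits Pᶜ := by
  obtain ⟨w⟩ := hW ⟨x, hxW⟩ ⟨y, hyW⟩
  obtain ⟨⟨⟨u, v⟩, huv⟩, -, huP, hvP⟩ := w.exists_boundary_dart (Subtype.val ⁻¹' P) hxP hyP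
  obtain ⟨-, h | h⟩ := cycleG_adj.1 huv
  · exact ⟨u, u.2, h ▸ v.2, .inl ⟨huP, h ▸ hvP⟩⟩
  · exact ⟨v, v.2, h ▸ u.2, .inr <| mem_exits_compl.2 ⟨hvP, h ▸ huP⟩⟩

theorem add_one_eq_of_covBy {s t : Fin n} (h : s ⋖ t) : s + 1 = t := by
  have := fin_val_add_one s
  have := Nat.covBy_iff_add_one_eq.1 (Fin.covBy_iff.1 h)
  grind

theorem induce_preimage_sub_preconnected (v : Fin n) (I : Set (Fin n)) [hI : I.OrdConnected] :
    ((cycleG n).induce ((· - v) ⁻¹' I)).Preconnected := by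
  have adj_of_covBy {s t : I} (h : s ⋖ t) : (cycleG n).Adj (s + v) (t + v) := by
    have hst : (s : Fin n) ⋖ t :=
      (Set.OrdConnected.apply_covBy_apply_iff (OrderEmbedding.subtype (· ∈ I))
        (by simpa using hI)).2 h
    refine cycleG_adj.2 ⟨fun heq ↦ hst.ne (add_right_cancel heq), .inl ?_⟩
    rw [← add_one_eq_of_covBy hst, add_right_comm]
  let f : SimpleGraph.hasse I →g (cycleG n).induce ((· - v) ⁻¹' I) :=
    { toFun t := ⟨t + v, by simp⟩
      map_rel' h := h.elim adj_of_covBy fun h ↦ (adj_of_covBy h).symm }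
  refine (SimpleGraph.hasse_preconnected_of_succ I).map f fun x ↦ ⟨⟨x - v, x.2⟩, ?_⟩
  simp [f]

theorem ordConnected_preimage_add_of_induce_preconnected {v : Fin n} {S : Set (Fin n)} (hv : v ∉ S)
    (hS : ((cycleG n).induce S).Preconnected) : ((· + v) ⁻¹' S).OrdConnected := by
  refine ⟨fun s hs t ht u ⟨hsu, hut⟩ ↦ ?_⟩
  by_contra hu
  -- A walk in `S` from `s + v` to `t + v` crosses the cut between the vertices before and after
  -- `u + v`, and every directed edge across this cut ends at `v` or at `u + v`.
  obtain ⟨z, -, hz, hz'⟩ := exists_mem_exits_of_induce_preconnected (P := {x | x - v < u}) hS hs ht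
    (by simpa using hsu.lt_of_ne (by rintro rfl; exact hu hs)) (by simpa using hut)
  have hval := fin_val_add_one (z - v)
  have hcut : z - v + 1 = 0 ∨ z - v + 1 = u := by
    simp only [Set.mem_union, mem_exits, Set.mem_compl_iff, Set.mem_ofPred_eq,
      add_sub_right_comm] at hz'
    rw [Fin.ext_iff, Fin.ext_iff, Fin.val_zero]
    split_ifs at hval <;> omega
  rw [← add_sub_right_comm, sub_eq_zero, sub_eq_iff_eq_add] at hcut
  rcases hcut with h | h
  · exact hv (h ▸ hz)
  · exact hu (show u + v ∈ S from h ▸ hz)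

theorem exists_eq_Ioc_of_ordConnected {I : Set (Fin n)} (hI : I.OrdConnected) (hne : I.Nonempty)
    (h0 : 0 ∉ I) : ∃ a b, a < b ∧ I = Set.Ioc a b := by
  obtain ⟨l, hl, hlmin⟩ := Set.exists_min_image I id I.toFinite hne
  obtain ⟨b, hb, hbmax⟩ := Set.exists_max_image I id I.toFinite hne
  have hl0 : l ≠ 0 := ne_of_mem_of_not_mem hl h0
  have hval := fin_val_add_one (l - 1)
  rw [sub_add_cancel] at hval
  have hlt : ∀ t, l - 1 < t ↔ l ≤ t := by grind
  refine ⟨l - 1, b, (hlt b).2 (hlmin b hb), Set.Subset.antisymm ?_ ?_⟩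
  · exact fun t ht ↦ ⟨(hlt t).2 (hlmin t ht), hbmax t ht⟩
  · exact fun t ⟨h₁, h₂⟩ ↦ hI.out hl hb ⟨(hlt t).1 h₁, h₂⟩

/-- The vertices met after `a` and up to `b` when the oriented cycle is traversed starting from `v`,
so that the boundary edges of the arc are `(a, a + 1)` and `(b, b + 1)`. Subtracting `v` turns
the traversal order into the order of `Fin n`; the arc is empty unless `a` comes before `b`. -/
def arc (v a b : Fin n) : Set (Fin n) :=
  (· - v) ⁻¹' Set.Ioc (a - v) (b - v)

omit [NeZero n] in
theorem mem_arc {v a b x : Fin n} : x ∈ arc v a b ↔ x - v ∈ Set.Ioc (a - v) (b - v) :=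
  Iff.rfl

theorem add_one_mem_arc {v a b x : Fin n} :
    x + 1 ∈ arc v a b ↔ x - v ∈ Set.Ico (a - v) (b - v) := by
  rw [mem_arc, add_sub_right_comm, add_one_mem_Ioc_iff]

theorem exits_arc {v a b : Fin n} (hab : a - v < b - v) : exits (arc v a b) = {b} := by
  ext x
  rw [mem_exits, mem_arc, add_one_mem_arc, Set.mem_singleton_iff, ← sub_left_inj (a := v)]
  grind

theorem exits_compl_arc {v a b : Fin n} (hab : a - v < b - v) : exits (arc v a b)ᶜ = {a} := by
  ext x
  rw [mem_exits_compl, mem_arc, add_one_mem_arc, Set.mem_singleton_iff, ← sub_left_inj (a := v)]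
  grind

theorem notMem_arc (v a b : Fin n) : v ∉ arc v a b := by
  simp [mem_arc]

theorem outMono_arc_sub_outMono_compl (K : Type*) [Field K] {v a b : Fin n} (hab : a - v < b - v) :
    outMono n K (arc v a b) - outMono n K (arc v a b)ᶜ = -edgeMinor K a b := by
  rw [outMono_of_exits_eq_singleton K (exits_compl_arc hab) (exits_arc hab),
    outMono_of_exits_eq_singleton K (by rw [compl_compl, exits_arc hab]) (exits_compl_arc hab),
    edgeMinor]
  ring

theorem induce_arc_connected {v a b : Fin n} (hab : a - v < b - v) :
    ((cycleG n).induce (arc v a b)).Connected where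
  preconnected := induce_preimage_sub_preconnected v _
  nonempty := ⟨⟨b, hab, le_rfl⟩⟩

theorem exists_eq_arc_of_induce_connected {v : Fin n} {S : Set (Fin n)} (hv : v ∉ S)
    (hS : ((cycleG n).induce S).Connected) : ∃ a b, a - v < b - v ∧ S = arc v a b := by
  obtain ⟨⟨x, hx⟩⟩ := hS.nonempty
  obtain ⟨a, b, hab, hI⟩ := exists_eq_Ioc_of_ordConnected
    (ordConnected_preimage_add_of_induce_preconnected hv hS.preconnected)
    ⟨x - v, by simpa using hx⟩ (by simpa using hv)
  refine ⟨a + v, b + v, by simpa using hab, ?_⟩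
  rw [arc, add_sub_cancel_right, add_sub_cancel_right, ← hI]
  ext; simp

section Parset

variable {ι : Type*} {V : ι → Set (Fin n)}

theorem exits_biUnion_subset (T : Set ι) : exits (⋃ j ∈ T, V j) ⊆ ⋃ j, exits (V j) := by
  rintro x ⟨hx, hx'⟩
  obtain ⟨j, hj, hxj⟩ := Set.mem_iUnion₂.1 hx
  exact Set.mem_iUnion.2 ⟨j, hxj, fun h ↦ hx' (Set.mem_biUnion hj h)⟩

theorem exists_eq_biUnion_iff_exits_subset (hcover : ∀ x, ∃ j, x ∈ V j)
    (hdisj : Pairwise fun i j ↦ Disjoint (V i) (V j))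
    (hconn : ∀ j, ((cycleG n).induce (V j)).Preconnected) {S : Set (Fin n)} :
    (∃ T : Set ι, S = ⋃ j ∈ T, V j) ↔ exits S ∪ exits Sᶜ ⊆ ⋃ j, exits (V j) := by
  constructor
  · rintro ⟨T, rfl⟩
    rw [Set.biUnion_compl_eq_of_pairwise_disjoint_of_iUnion_eq_univ
      (Set.iUnion_eq_univ_iff.2 hcover) hdisj]
    exact Set.union_subset (exits_biUnion_subset T) (exits_biUnion_subset Tᶜ)
  · intro hS
    refine ⟨{j | V j ⊆ S}, Set.Subset.antisymm (fun x hx ↦ ?_) (Set.iUnion₂_subset fun j hj ↦ hj)⟩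
    obtain ⟨j, hxj⟩ := hcover x
    refine Set.mem_biUnion (x := j) (fun y hyj ↦ ?_) hxj
    by_contra hy
    obtain ⟨z, hzj, hzj', hz⟩ :=
      exists_mem_exits_of_induce_preconnected (hconn j) hxj hyj hx hy
    obtain ⟨i, hzi, hzi'⟩ := Set.mem_iUnion.1 (hS hz)
    have : i = j := by_contra fun hij ↦ Set.disjoint_left.1 (hdisj hij) hzi hzj
    exact hzi' (this ▸ hzj')

theorem isConnParset_and_not_subset_iff_exists_arc {k : ℕ} {V : Fin k → Set (Fin n)}
    (hcover : ∀ x, ∃ j, x ∈ V j) (hdisj : Pairwise fun i j ↦ Disjoint (V i) (V j))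
    (hconn : ∀ j, ((cycleG n).induce (V j)).Preconnected) {s : Fin k} {v : Fin n} (hv : v ∈ V s)
    {S : Set (Fin n)} :
    isConnParset n k V S ∧ ¬ V s ⊆ S ↔
      ∃ a ∈ ⋃ j, exits (V j), ∃ b ∈ ⋃ j, exits (V j), a - v < b - v ∧ S = arc v a b := by
  constructor
  · rintro ⟨⟨⟨T, hT⟩, hS⟩, hs⟩
    rw [hT, subset_biUnion_iff_mem_biUnion hdisj hv, ← hT] at hs
    obtain ⟨a, b, hab, rfl⟩ := exists_eq_arc_of_induce_connected hs hS
    have hexits := (exists_eq_biUnion_iff_exits_subset hcover hdisj hconn).1 ⟨T, hT⟩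
    rw [exits_arc hab, exits_compl_arc hab, Set.union_subset_iff, Set.singleton_subset_iff,
      Set.singleton_subset_iff] at hexits
    exact ⟨a, hexits.2, b, hexits.1, hab, rfl⟩
  · rintro ⟨a, ha, b, hb, hab, rfl⟩
    refine ⟨⟨(exists_eq_biUnion_iff_exits_subset hcover hdisj hconn).2 ?_,
      induce_arc_connected hab⟩, fun hs ↦ notMem_arc v a b (hs hv)⟩
    rw [exits_arc hab, exits_compl_arc hab]
    exact Set.union_subset (Set.singleton_subset_iff.2 hb) (Set.singleton_subset_iff.2 ha)

end Parset

theorem eq_and_eq_of_edgeMinor_comp_eq (R : Type*) [CommRing R] [Nontrivial R] {κ : Type*}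
    [LinearOrder κ] {p : κ → Fin n} (hp : Function.Injective p) {c d c' d' : κ}
    (hcd : c < d) (hcd' : c' < d') (h : edgeMinor R (p c) (p d) = edgeMinor R (p c') (p d')) :
    c = c' ∧ d = d' := by
  have := sym2_eq_of_edgeMinor_eq R (hp.ne hcd.ne) (hp.ne hcd'.ne) h
  simp only [Sym2.eq_iff, hp.eq_iff] at this
  refine this.resolve_right ?_
  rintro ⟨rfl, rfl⟩
  exact hcd.not_gt hcd'

end Cycle

theorem statement_4_general (K : Type*) [Field K] {n k : ℕ} [NeZero n] {κ : Type*} [LinearOrder κ]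
    (V : Fin k → Set (Fin n)) (s : Fin k)
    (hcover : ∀ x : Fin n, ∃ j, x ∈ V j)
    (hdisj : ∀ j₁ j₂ : Fin k, j₁ ≠ j₂ → Disjoint (V j₁) (V j₂))
    (hconn : ∀ j, ((cycleG n).induce (V j)).Preconnected)
    (p q : κ → Fin n)
    (hpq : ∀ c, q c = p c + 1)
    (hcross : ∀ c j, p c ∈ V j → q c ∉ V j)
    (hall : ∀ x : Fin n, (∃ j, x ∈ V j ∧ x + 1 ∉ V j) → ∃ c, p c = x)
    (horder : ∃ v₀, v₀ ∈ V s ∧ StrictMono fun c : κ ↦ ((p c - v₀ : Fin n) : ℕ)) :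
    (∀ S : Set (Fin n), isConnParset n k V S → ¬ V s ⊆ S →
      ∃! cc : κ × κ, cc.1 < cc.2 ∧
        outMono n K S - outMono n K Sᶜ
          = -(X (p cc.1) * X (q cc.2) - X (p cc.2) * X (q cc.1))) ∧
    (∀ c₁ c₂ : κ, c₁ < c₂ →
      ∃! S : Set (Fin n), (isConnParset n k V S ∧ ¬ V s ⊆ S) ∧
        outMono n K S - outMono n K Sᶜ
          = -(X (p c₁) * X (q c₂) - X (p c₂) * X (q c₁))) := by
  obtain rfl : q = fun c ↦ p c + 1 := funext hpq
  obtain ⟨v, hv, hmono⟩ := horder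
  have hrange : ⋃ j, exits (V j) = Set.range p := by
    refine Set.Subset.antisymm (fun x hx ↦ hall x (Set.mem_iUnion.1 hx)) ?_
    rintro _ ⟨c, rfl⟩
    obtain ⟨j, hj⟩ := hcover (p c)
    exact Set.mem_iUnion.2 ⟨j, hj, hcross c j hj⟩
  have hlt {c d : κ} : p c - v < p d - v ↔ c < d := hmono.lt_iff_lt
  have hparset (S : Set (Fin n)) : isConnParset n k V S ∧ ¬ V s ⊆ S ↔
      ∃ c d, c < d ∧ S = arc v (p c) (p d) := by
    simp only [isConnParset_and_not_subset_iff_exists_arc hcover hdisj hconn hv, hrange,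
      Set.exists_range_iff, hlt]
  have hinj : Function.Injective p := fun c d h ↦ hmono.injective (by simp only [h])
  have hbinom {c d : κ} (hcd : c < d) := outMono_arc_sub_outMono_compl K (hlt.2 hcd)
  constructor
  · intro S hS hs
    obtain ⟨c, d, hcd, rfl⟩ := (hparset S).1 ⟨hS, hs⟩
    refine ⟨(c, d), ⟨hcd, hbinom hcd⟩, ?_⟩
    rintro ⟨c', d'⟩ ⟨hcd', h⟩
    obtain ⟨rfl, rfl⟩ :=
      eq_and_eq_of_edgeMinor_comp_eq K hinj hcd hcd' (neg_injective ((hbinom hcd).symm.trans h))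
    rfl
  · intro c d hcd
    refine ⟨arc v (p c) (p d), ⟨(hparset _).2 ⟨c, d, hcd, rfl⟩, hbinom hcd⟩, ?_⟩
    rintro S ⟨hS, h⟩
    obtain ⟨c', d', hcd', rfl⟩ := (hparset S).1 hS
    obtain ⟨rfl, rfl⟩ :=
      eq_and_eq_of_edgeMinor_comp_eq K hinj hcd' hcd (neg_injective ((hbinom hcd').symm.trans h))
    rfl

/-- For a parcycle `(C_n, Π)` with matrix `A = A_{(C_n,Π)}` (columns the
directed relevant edges `(p_i, q_i)` in traversal order), the binomials
`x^{S→S̄} - x^{S̄→S}` attached to connected-parsets `S` avoiding the sink are in bijection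
with the `2 × 2` minors of `A`: each such `S` determines a unique pair of columns `i < j`
with `x^{S→S̄} - x^{S̄→S} = -(A₁ᵢA₂ⱼ - A₁ⱼA₂ᵢ)`, and conversely. -/
theorem statement_4 (K : Type*) [Field K] (n k : ℕ) [NeZero n] (hn : 3 ≤ n) (hk : 2 ≤ k)
    (V : Fin k → Set (Fin n))
    (hcover : ∀ x : Fin n, ∃ j, x ∈ V j)
    (hdisj : ∀ j₁ j₂ : Fin k, j₁ ≠ j₂ → Disjoint (V j₁) (V j₂))
    (hconn : ∀ j, ((cycleG n).induce (V j)).Connected)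
    (hsink : (⟨n - 1, by omega⟩ : Fin n) ∈ V ⟨k - 1, by omega⟩)
    (p q : Fin k → Fin n)
    (hpq : ∀ c, q c = p c + 1)
    (hcross : ∀ c j, p c ∈ V j → q c ∉ V j)
    (hall : ∀ x : Fin n, (∃ j, x ∈ V j ∧ x + 1 ∉ V j) → ∃ c, p c = x)
    (hinjp : Function.Injective p)
    (horder : ∃ v₀, v₀ ∈ V ⟨k - 1, by omega⟩ ∧
      StrictMono fun c : Fin k => ((p c - v₀ : Fin n) : ℕ)) :
    (∀ S : Set (Fin n), isConnParset n k V S → ¬ V ⟨k - 1, by omega⟩ ⊆ S →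
      ∃! cc : Fin k × Fin k, cc.1 < cc.2 ∧
        outMono n K S - outMono n K Sᶜ
          = -(X (p cc.1) * X (q cc.2) - X (p cc.2) * X (q cc.1))) ∧
    (∀ c₁ c₂ : Fin k, c₁ < c₂ →
      ∃! S : Set (Fin n), (isConnParset n k V S ∧ ¬ V ⟨k - 1, by omega⟩ ⊆ S) ∧
        outMono n K S - outMono n K Sᶜ
          = -(X (p c₁) * X (q c₂) - X (p c₂) * X (q c₁))) :=
  statement_4_general K V _ hcover hdisj (fun j ↦ (hconn j).preconnected) p q hpq hcross hall horder
end
end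

section
/- Let (C_n,Π) be a parcycle with Π = {V_1,…,V_k} and sink V_k. Then the toppling ideal of (C_n,Π) is generated by the binomials attached to connected-parsets avoiding the sink: I_Π = ⟨x^{S→S̄} − x^{S̄→S} : S a connected-parset of (C_n,Π) not containing V_k⟩. -/
/-!
The argument works for every finite graph `G` whose vertex set is partitioned into connected parts.
A vector of the lattice is the Laplacian `Δs` of an integer function `s` that is constant on the
parts, and adding a constant we may assume that `s` vanishes on the sink. Let `x^u - x^v` be a
binomial with `u - v = Δs`, where after exchanging `u` and `v` the function `s` is positive
somewhere. Take `S` to be a maximal connected subset of the set where `s` attains its maximum: it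
is a union of parts, it avoids the sink, and `s` drops by at least one along each edge leaving `S`.
Hence `x^u` is divisible by `x^{S → S̄}`. Replacing this factor by `x^{S̄ → S}` changes `x^u` by a
multiple of a cut binomial and replaces `s` by `s - 1_S`, so induction on `∑ |s i|` applies.

Encoding the partition as the fibres of a map `π` turns the functions that are constant on the parts
into the composites `f ∘ π`, and the parsets into the preimages `π ⁻¹' T`.
-/

noncomputable section

open MvPolynomial

section Fibers

variable {α κ : Type*}

theorem exists_eq_preimage_singleton {P : κ → Set α} (hcover : ∀ x, ∃ j, x ∈ P j)
    (hdisj : Pairwise (Function.onFun Disjoint P)) : ∃ π : α → κ, P = fun j => π ⁻¹' {j} := by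
  choose π hπ using hcover
  refine ⟨π, funext fun j => Set.ext fun x => ⟨fun hx => ?_, ?_⟩⟩
  · by_contra hne
    exact Set.disjoint_left.1 (hdisj hne) (hπ x) hx
  · rintro rfl
    exact hπ x

theorem span_range_indicator_preimage_singleton (R : Type*) [Semiring R] [Finite α] (π : α → κ) :
    Submodule.span R (Set.range fun j => (π ⁻¹' {j}).indicator (1 : α → R))
      = LinearMap.range (LinearMap.funLeft R R π) := by
  classical
  have := Fintype.ofFinite α
  apply le_antisymm
  · rw [Submodule.span_le]
    rintro _ ⟨j, rfl⟩
    exact ⟨({j} : Set κ).indicator 1, funext fun _ => rfl⟩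
  · rintro _ ⟨f, rfl⟩
    have hsum : LinearMap.funLeft R R π f
        = ∑ j ∈ Finset.univ.image π, f j • (π ⁻¹' {j}).indicator (1 : α → R) := by
      ext i
      simp [Set.indicator_apply]
    rw [hsum]
    exact Submodule.sum_mem _ fun j _ =>
      Submodule.smul_mem _ _ (Submodule.subset_span (Set.mem_range_self j))

end Fibers

section Graph

variable {α κ : Type*} (G : SimpleGraph α)

theorem exists_connected_subset_absorbing [Finite α] {S : Set α} (hS : S.Nonempty) :
    ∃ C ⊆ S, (G.induce C).Connected ∧
      ∀ D ⊆ S, (G.induce D).Preconnected → (C ∩ D).Nonempty → D ⊆ C := by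
  obtain ⟨x, hx⟩ := hS
  obtain ⟨C, hC⟩ := (Set.toFinite {C | C ⊆ S ∧ (G.induce C).Connected}).exists_maximal
    ⟨{x}, Set.singleton_subset_iff.2 hx, SimpleGraph.Connected.of_subsingleton⟩
  refine ⟨C, hC.prop.1, hC.prop.2, fun D hDS hD hCD => ?_⟩
  exact Set.subset_union_right.trans <| hC.le_of_ge
    ⟨Set.union_subset hC.prop.1 hDS,
      SimpleGraph.induce_union_connected hC.prop.2.preconnected hD hCD⟩
    Set.subset_union_left

variable {G} in
theorem exists_connected_preimage_isMax [Finite α] [Nonempty α] {π : α → κ}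
    (hconn : ∀ j, (G.induce (π ⁻¹' {j})).Preconnected) (f : κ → ℤ) :
    ∃ T : Set κ, (G.induce (π ⁻¹' T)).Connected ∧
      (∀ i ∈ π ⁻¹' T, ∀ l, f (π l) ≤ f (π i)) ∧
      ∀ i ∈ π ⁻¹' T, ∀ l ∉ π ⁻¹' T, G.Adj i l → f (π l) < f (π i) := by
  obtain ⟨m, hm⟩ := Finite.exists_max (f ∘ π)
  obtain ⟨C, hCmax, hC, habsorb⟩ :=
    exists_connected_subset_absorbing G (S := {i | f (π i) = f (π m)}) ⟨m, rfl⟩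
  have hparset : π ⁻¹' (π '' C) = C := by
    refine (Set.subset_preimage_image π C).antisymm' ?_
    rintro x ⟨c, hc, hcx⟩
    refine habsorb (π ⁻¹' {π c}) ?_ (hconn _) ⟨c, hc, rfl⟩ hcx.symm
    intro y hy
    exact (congrArg f hy).trans (hCmax hc)
  refine ⟨π '' C, ?_⟩
  rw [hparset]
  refine ⟨hC, fun i hi l => (hm l).trans_eq (hCmax hi).symm, fun i hi l hl hil => ?_⟩
  rw [hCmax hi]
  refine lt_of_le_of_ne (hm l) fun hlm => hl ?_
  have hpair : {i, l} ⊆ {i | f (π i) = f (π m)} :=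
    Set.insert_subset (hCmax hi) (Set.singleton_subset_iff.2 hlm)
  exact habsorb {i, l} hpair (SimpleGraph.induce_pair_connected_of_adj hil).preconnected
    ⟨i, hi, Set.mem_insert i _⟩ (Set.mem_insert_of_mem i rfl)

variable [Fintype α]

open Classical in
/-- The Laplacian of `G` as an operator on integer functions on the vertices. The Laplacian matrix
is symmetric, so the sum `b_S` of its rows over a set `S` is the value at the indicator of `S`. -/
def laplacian : (α → ℤ) →ₗ[ℤ] (α → ℤ) :=
  (G.lapMatrix ℤ).mulVecLin

open Classical in
/-- The exponent vector of the monomial `x^{S → S̄}`: the `i`-th entry is the number of edges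
joining `i ∈ S` to the complement of `S`. -/
def cutDegree (S : Set α) (i : α) : ℕ :=
  if i ∈ S then ∑ j ∈ G.neighborFinset i, if j ∈ S then 0 else 1 else 0

open Classical in
theorem laplacian_apply (s : α → ℤ) (i : α) :
    laplacian G s i = ∑ j ∈ G.neighborFinset i, (s i - s j) := by
  simp [laplacian, SimpleGraph.lapMatrix_mulVec_apply]

theorem laplacian_indicator (S : Set α) (i : α) :
    laplacian G (S.indicator 1) i = (cutDegree G S i : ℤ) - cutDegree G Sᶜ i := by
  classical
  rw [laplacian_apply]
  by_cases hi : i ∈ S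
  · simp only [cutDegree, hi, Set.mem_compl_iff, not_true, if_true, if_false, Nat.cast_sum,
      Nat.cast_zero, sub_zero]
    refine Finset.sum_congr rfl fun j _ => ?_
    by_cases hj : j ∈ S <;> simp [hi, hj]
  · simp only [cutDegree, hi, Set.mem_compl_iff, not_false_eq_true, if_true, if_false,
      Nat.cast_sum, Nat.cast_zero, zero_sub, ← Finset.sum_neg_distrib]
    refine Finset.sum_congr rfl fun j _ => ?_
    by_cases hj : j ∈ S <;> simp [hi, hj]

variable {G} in
theorem cutDegree_le_laplacian {s : α → ℤ} {S : Set α} {i : α} (hi : i ∈ S)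
    (hle : ∀ j, G.Adj i j → s j ≤ s i) (hlt : ∀ j ∉ S, G.Adj i j → s j < s i) :
    (cutDegree G S i : ℤ) ≤ laplacian G s i := by
  classical
  rw [laplacian_apply, cutDegree, if_pos hi, Nat.cast_sum]
  refine Finset.sum_le_sum fun j hj => ?_
  have hadj := (G.mem_neighborFinset i j).1 hj
  by_cases hjS : j ∈ S
  · simpa [hjS] using hle j hadj
  · have := hlt j hjS hadj
    simp only [hjS, if_false, Nat.cast_one]
    lia

/-- The lattice `L_Π ⊆ ℤ^α` of the partition `Π` of the vertices into the sets `P j`. -/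
def topplingLattice (P : κ → Set α) : Submodule ℤ (α → ℤ) :=
  Submodule.span ℤ (Set.range fun j => laplacian G ((P j).indicator 1))

theorem mem_topplingLattice_preimage_singleton {π : α → κ} {w : α → ℤ} :
    w ∈ topplingLattice G (fun j => π ⁻¹' {j}) ↔ ∃ f : κ → ℤ, laplacian G (f ∘ π) = w := by
  have hmap : topplingLattice G (fun j => π ⁻¹' {j})
      = (LinearMap.range (LinearMap.funLeft ℤ ℤ π)).map (laplacian G) := by
    rw [← span_range_indicator_preimage_singleton, Submodule.map_span, ← Set.range_comp]
    rfl
  rw [hmap, ← LinearMap.range_comp]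
  rfl

end Graph

section XPow

variable {α : Type*} [Fintype α] (R : Type*) [CommRing R]

/-- The monomial `x^u`, with `u` a plain function as in `latticeIdeal`. -/
def xPow (u : α → ℕ) : MvPolynomial α R :=
  ∏ i, X i ^ u i

theorem xPow_add (u v : α → ℕ) : xPow R (u + v) = xPow R u * xPow R v := by
  simp only [xPow, Pi.add_apply, pow_add, Finset.prod_mul_distrib]

variable {R} in
theorem xPow_sub_xPow_mem_of_le {J : Ideal (MvPolynomial α R)} {a b u v : α → ℕ} (hau : a ≤ u)
    (hab : xPow R a - xPow R b ∈ J) (hv : xPow R (u - a + b) - xPow R v ∈ J) :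
    xPow R u - xPow R v ∈ J := by
  have hsplit : xPow R u - xPow R v
      = xPow R (u - a) * (xPow R a - xPow R b) + (xPow R (u - a + b) - xPow R v) := by
    rw [mul_sub, ← xPow_add, ← xPow_add, tsub_add_cancel_of_le hau, sub_add_sub_cancel]
  rw [hsplit]
  exact J.add_mem (J.mul_mem_left _ hab) hv

end XPow

section TopplingIdeal

variable {α κ : Type*} [Fintype α] {G : SimpleGraph α} {π : α → κ}

theorem sum_natAbs_sub_indicator_lt {s : α → ℤ} {S : Set α} (hS : S.Nonempty)
    (hpos : ∀ i ∈ S, 0 < s i) :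
    ∑ i, ((s - S.indicator 1 : α → ℤ) i).natAbs < ∑ i, (s i).natAbs := by
  obtain ⟨c, hc⟩ := hS
  have hdrop : ∀ i ∈ S, ((s - S.indicator 1 : α → ℤ) i).natAbs < (s i).natAbs := by
    intro i hi
    have := hpos i hi
    simp only [Pi.sub_apply, Set.indicator_of_mem hi, Pi.one_apply]
    lia
  refine Finset.sum_lt_sum (fun i _ => ?_) ⟨c, Finset.mem_univ c, hdrop c hc⟩
  by_cases hi : i ∈ S
  · exact (hdrop i hi).le
  · simp [hi]

theorem exists_connected_preimage_cutDegree_le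
    (hconn : ∀ j, (G.induce (π ⁻¹' {j})).Preconnected) {f : κ → ℤ} (hf : ∃ i, 0 < f (π i))
    {u v : α → ℕ} (huv : laplacian G (f ∘ π) = fun i => (u i : ℤ) - v i) :
    ∃ T : Set κ, (G.induce (π ⁻¹' T)).Connected ∧ (∀ i ∈ π ⁻¹' T, 0 < f (π i)) ∧
      cutDegree G (π ⁻¹' T) ≤ u := by
  obtain ⟨i₀, hi₀⟩ := hf
  have : Nonempty α := ⟨i₀⟩
  obtain ⟨T, hT, hmax, hlt⟩ := exists_connected_preimage_isMax hconn f
  refine ⟨T, hT, fun i hi => hi₀.trans_le (hmax i hi i₀), fun i => ?_⟩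
  by_cases hi : i ∈ π ⁻¹' T
  · have hle := cutDegree_le_laplacian (s := f ∘ π) hi (fun l _ => hmax i hi l) (hlt i hi)
    have hi_eq := congrFun huv i
    lia
  · simp [cutDegree, hi]

theorem laplacian_sub_indicator_eq {s : α → ℤ} {S : Set α} {u v : α → ℕ}
    (huv : laplacian G s = fun i => (u i : ℤ) - v i) (hle : cutDegree G S ≤ u) :
    laplacian G (s - S.indicator 1)
      = fun i => ((u - cutDegree G S + cutDegree G Sᶜ) i : ℤ) - v i := by
  ext i
  rw [map_sub, Pi.sub_apply, huv, laplacian_indicator, Pi.add_apply, Pi.sub_apply, Nat.cast_add,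
    Nat.cast_sub (hle i)]
  ring

variable {R : Type*} [CommRing R]

theorem xPow_sub_xPow_mem_of_laplacian_comp_eq
    (hconn : ∀ j, (G.induce (π ⁻¹' {j})).Preconnected) {q : α} {J : Ideal (MvPolynomial α R)}
    (hJ : ∀ T : Set κ, (G.induce (π ⁻¹' T)).Connected → q ∉ π ⁻¹' T →
      xPow R (cutDegree G (π ⁻¹' T)) - xPow R (cutDegree G (π ⁻¹' T)ᶜ) ∈ J)
    {f : κ → ℤ} (hfq : f (π q) = 0) {u v : α → ℕ}
    (huv : laplacian G (f ∘ π) = fun i => (u i : ℤ) - v i) : xPow R u - xPow R v ∈ J := by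
  induction hN : ∑ i, (f (π i)).natAbs using Nat.strong_induction_on generalizing f u v with
  | _ N ih =>
  by_cases hzero : f ∘ π = 0
  · have huv_eq : u = v := by
      ext i
      have := congrFun huv i
      simp only [hzero, map_zero, Pi.zero_apply] at this
      lia
    simp [huv_eq]
  wlog hpos : ∃ i, 0 < f (π i) generalizing f u v
  · obtain ⟨i, hi⟩ := Function.ne_iff.1 hzero
    rw [← neg_sub]
    refine J.neg_mem (this (f := -f) (by simpa using hfq) ?_ (by simpa using hN) ?_ ⟨i, ?_⟩)
    · rw [Pi.neg_comp, map_neg, huv]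
      ext
      simp
    · rwa [Pi.neg_comp, neg_eq_zero]
    · exact neg_pos.2 ((not_lt.1 fun h => hpos ⟨i, h⟩).lt_of_ne hi)
  obtain ⟨T, hT, hTpos, hTu⟩ := exists_connected_preimage_cutDegree_le hconn hpos huv
  have hqT : q ∉ π ⁻¹' T := fun hq => (hTpos q hq).ne' hfq
  refine xPow_sub_xPow_mem_of_le hTu (hJ T hT hqT) ?_
  have hlap := laplacian_sub_indicator_eq huv hTu
  have hcomp : (f - T.indicator 1) ∘ π = f ∘ π - (π ⁻¹' T).indicator 1 := rfl
  rw [← hcomp] at hlap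
  refine ih _ ?_ (f := f - T.indicator 1) ?_ hlap rfl
  · rw [← hN]
    exact sum_natAbs_sub_indicator_lt (Set.nonempty_coe_sort.1 hT.nonempty) hTpos
  · simpa [hfq] using hqT

variable (G R)

/-- The toppling ideal `I_Π ⊆ R[x_i : i ∈ α]` of the graph `G` with the partition `Π` of its
vertices into the sets `P j`. -/
def topplingIdeal (P : κ → Set α) : Ideal (MvPolynomial α R) :=
  Ideal.span {p | ∃ u v : α → ℕ,
    ((fun i => (u i : ℤ)) - fun i => (v i : ℤ)) ∈ topplingLattice G P ∧
    p = xPow R u - xPow R v}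

/-- The ideal generated by the binomials `x^{S → S̄} - x^{S̄ → S}` of the connected-parsets `S`
that do not contain the part `P sink`. -/
def connectedCutIdeal (P : κ → Set α) (sink : κ) : Ideal (MvPolynomial α R) :=
  Ideal.span {p | ∃ S : Set α,
    ((∃ T : Set κ, S = ⋃ j ∈ T, P j) ∧ (G.induce S).Connected) ∧ ¬ P sink ⊆ S ∧
    p = xPow R (cutDegree G S) - xPow R (cutDegree G Sᶜ)}

theorem connectedCutIdeal_le_topplingIdeal (sink : κ) :
    connectedCutIdeal G R (fun j => π ⁻¹' {j}) sink ≤ topplingIdeal G R fun j => π ⁻¹' {j} := by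
  rw [connectedCutIdeal, Ideal.span_le]
  rintro _ ⟨_, ⟨⟨T, rfl⟩, -⟩, -, rfl⟩
  refine Ideal.subset_span
    ⟨_, _, (mem_topplingLattice_preimage_singleton G).2 ⟨T.indicator 1, ?_⟩, rfl⟩
  rw [Set.biUnion_preimage_singleton]
  exact funext (laplacian_indicator G (π ⁻¹' T))

variable {G}

theorem topplingIdeal_le_connectedCutIdeal (hconn : ∀ j, (G.induce (π ⁻¹' {j})).Preconnected)
    (q : α) :
    topplingIdeal G R (fun j => π ⁻¹' {j}) ≤ connectedCutIdeal G R (fun j => π ⁻¹' {j}) (π q) := by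
  rw [topplingIdeal, Ideal.span_le]
  rintro _ ⟨u, v, huv, rfl⟩
  obtain ⟨f, hf⟩ := (mem_topplingLattice_preimage_singleton G).1 huv
  refine xPow_sub_xPow_mem_of_laplacian_comp_eq hconn (q := q) (f := fun j => f j - f (π q))
    ?_ (sub_self _) ?_
  · intro T hT hqT
    refine Ideal.subset_span ⟨π ⁻¹' T, ⟨⟨T, ?_⟩, hT⟩, fun hsub => hqT (hsub rfl), rfl⟩
    exact (Set.biUnion_preimage_singleton π T).symm
  · refine Eq.trans ?_ hf
    ext i
    simp only [laplacian_apply, Function.comp_apply, sub_sub_sub_cancel_right]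

theorem statement_6_general {P : κ → Set α} (hcover : ∀ x, ∃ j, x ∈ P j)
    (hdisj : Pairwise (Function.onFun Disjoint P)) (hconn : ∀ j, (G.induce (P j)).Connected)
    (sink : κ) : topplingIdeal G R P = connectedCutIdeal G R P sink := by
  obtain ⟨π, rfl⟩ := exists_eq_preimage_singleton hcover hdisj
  obtain ⟨⟨q, rfl⟩⟩ := (hconn sink).nonempty
  exact (topplingIdeal_le_connectedCutIdeal R (fun j => (hconn j).preconnected) q).antisymm
    (connectedCutIdeal_le_topplingIdeal G R _)

end TopplingIdeal

section Cycle

variable {n : ℕ} [NeZero n]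

variable (n) in
theorem cycleG_eq_cycleGraph : cycleG n = SimpleGraph.cycleGraph n := by
  obtain ⟨m, rfl⟩ := Nat.exists_eq_succ_of_ne_zero (NeZero.ne n)
  rw [SimpleGraph.cycleGraph_eq_circulantGraph]
  ext i j
  simp [cycleG, sub_eq_iff_eq_add', or_comm]

open Classical in
theorem neighborFinset_cycleG (hn : 3 ≤ n) (i : Fin n) :
    (cycleG n).neighborFinset i = {i - 1, i + 1} := by
  obtain ⟨m, rfl⟩ := Nat.exists_eq_add_of_le' hn
  ext j
  rw [← SimpleGraph.cycleGraph_neighborFinset, SimpleGraph.mem_neighborFinset,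
    SimpleGraph.mem_neighborFinset, cycleG_eq_cycleGraph]

theorem fin_sub_one_ne_add_one (hn : 3 ≤ n) (i : Fin n) : i - 1 ≠ i + 1 := by
  obtain ⟨m, rfl⟩ := Nat.exists_eq_add_of_le' hn
  rw [← Finset.card_pair_eq_two_iff, ← SimpleGraph.cycleGraph_degree_two_le,
    SimpleGraph.cycleGraph_degree_three_le]

theorem outVec_eq_cutDegree (hn : 3 ≤ n) (S : Set (Fin n)) :
    outVec n S = cutDegree (cycleG n) S := by
  classical
  ext i
  rw [outVec, cutDegree, neighborFinset_cycleG hn, Finset.sum_pair (fin_sub_one_ne_add_one hn i),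
    add_comm]

theorem cycLap_eq_laplacian_single (hn : 3 ≤ n) (j : Fin n) :
    cycLap n j = laplacian (cycleG n) (Pi.single j 1) := by
  classical
  ext l
  rw [laplacian_apply, neighborFinset_cycleG hn, Finset.sum_pair (fin_sub_one_ne_add_one hn l)]
  have hpred : l - 1 = j ↔ l = j + 1 := sub_eq_iff_eq_add
  have hnbr_ne := fin_sub_one_ne_add_one hn l
  have hself : l ∉ ({l - 1, l + 1} : Finset (Fin n)) :=
    neighborFinset_cycleG hn l ▸ (cycleG n).notMem_neighborFinset_self l
  simp only [cycLap, Pi.single_apply, hpred]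
  grind

theorem bPart_eq_laplacian_indicator (hn : 3 ≤ n) (S : Set (Fin n)) :
    bPart n S = laplacian (cycleG n) (S.indicator 1) := by
  classical
  rw [← Finset.univ_sum_single (S.indicator 1), map_sum, bPart]
  refine Finset.sum_congr rfl fun j _ => ?_
  by_cases hj : j ∈ S <;> simp [hj, cycLap_eq_laplacian_single hn]

theorem topplingPar_eq_topplingIdeal (hn : 3 ≤ n) {k : ℕ} (K : Type*) [Field K]
    (V : Fin k → Set (Fin n)) : topplingPar n k K V = topplingIdeal (cycleG n) K V := by
  simp only [topplingPar, bPart_eq_laplacian_indicator hn]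
  rfl

theorem outMono_eq_xPow_cutDegree (hn : 3 ≤ n) (K : Type*) [Field K] (S : Set (Fin n)) :
    outMono n K S = xPow K (cutDegree (cycleG n) S) := by
  rw [← outVec_eq_cutDegree hn]
  rfl

end Cycle

/-- The toppling ideal of a parcycle `(C_n, Π)` with sink `V_k` is
generated by the binomials `x^{S→S̄} - x^{S̄→S}` over all connected-parsets `S` of
`(C_n, Π)` not containing the sink. -/
theorem statement_6 (K : Type*) [Field K] (n k : ℕ) [NeZero n] (hn : 3 ≤ n) (hk : 1 ≤ k)
    (V : Fin k → Set (Fin n))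
    (hcover : ∀ x : Fin n, ∃ j, x ∈ V j)
    (hdisj : ∀ j₁ j₂ : Fin k, j₁ ≠ j₂ → Disjoint (V j₁) (V j₂))
    (hconn : ∀ j, ((cycleG n).induce (V j)).Connected)
    (hsink : (⟨n - 1, by omega⟩ : Fin n) ∈ V ⟨k - 1, by omega⟩) :
    topplingPar n k K V
      = Ideal.span { f | ∃ S : Set (Fin n),
          isConnParset n k V S ∧ ¬ V ⟨k - 1, by omega⟩ ⊆ S ∧
          f = outMono n K S - outMono n K Sᶜ } := by
  simp only [topplingPar_eq_topplingIdeal hn, outMono_eq_xPow_cutDegree hn]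
  exact statement_6_general K hcover (fun _ _ => hdisj _ _) hconn _
end
end
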